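/- Let k ≥ 3 and let H be a covering k-hypergraph, i.e., a (k−1)-covering k-hypergraph. Then H is eulerian if and only if H has at least two edges. -/

import Mathlib

/-- A closed walk of length `k` in a hypergraph on vertex type `V` whose edges are
finite sets of vertices: an alternating sequence of vertices and edges such that
consecutive vertices are distinct and both lie in the interposed edge, and the
first vertex equals the last. -/
def IsClosedWalk {V : Type} (k : ℕ) (v : Fin (k + 1) → V) (e : Fin k → Finset V) : Prop :=
  v 0 = v (Fin.last k) ∧
    ∀ i : Fin k, v i.castSucc ≠ v i.succ ∧ v i.castSucc ∈ e i ∧ v i.succ ∈ e i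

/-- The multiset of edges traversed by a walk (with multiplicity). -/
def walkEdges {V : Type} {k : ℕ} (e : Fin k → Finset V) : Multiset (Finset V) :=
  Multiset.ofList (List.ofFn e)

/-- A hypergraph, given by its edge multiset `E` over vertex type `V`, is eulerian if it
admits a closed walk whose multiset of traversed edges is exactly `E`, i.e. a closed
strict trail traversing every edge exactly once (a trivial walk works iff `E = 0`,
matching the convention that a trivial walk is an Euler tour of an edgeless
hypergraph). -/
def IsEulerian {V : Type} (E : Multiset (Finset V)) : Prop :=
  ∃ (k : ℕ) (v : Fin (k + 1) → V) (e : Fin k → Finset V),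
    IsClosedWalk k v e ∧ walkEdges e = E

/-- An `l`-covering `k`-hypergraph on vertex type `V`: a nonempty `k`-uniform edge
multiset such that every `l`-element subset of the vertex set is contained in at
least one edge. -/
def IsCoveringHypergraph {V : Type} [DecidableEq V] (E : Multiset (Finset V))
    (l k : ℕ) : Prop :=
  E ≠ 0 ∧ (∀ f ∈ E, f.card = k) ∧
    ∀ s : Finset V, s.card = l → ∃ f ∈ E, s ⊆ f


set_option linter.unusedSectionVars false
set_option linter.all false
namespace CovEuler

variable {V ι : Type} [Fintype V] [DecidableEq V] [Fintype ι] [DecidableEq ι]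

def dl (p v : V) : ZMod 2 := if v = p then 1 else 0
def chi (s : Finset V) (v : V) : ZMod 2 := if v ∈ s then 1 else 0
def bal (c : ι → Finset V) (v : V) : ZMod 2 := ∑ l, chi (c l) v
def Unc (s : Finset V) (X : V → Prop) : Prop := ∀ p ∈ s, ∀ q ∈ s, X p → X q
def used (c : ι → Finset V) : Finset ι := Finset.univ.filter (fun l => (c l).Nonempty)
def fl (c : ι → Finset V) (i : ι) (p q : V) : ι → Finset V :=
  Function.update c i (symmDiff (c i) {p, q})

structure PSt (t c : ι → Finset V) : Prop where
  sub : ∀ l, c l ⊆ t l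
  card : ∀ l, c l = ∅ ∨ (c l).card = 2
  even : ∀ v, bal c v = 0

def Conn (c : ι → Finset V) : Prop :=
  ∀ X : V → Prop, (∀ l, Unc (c l) X) → ∀ l l' p q, p ∈ c l → q ∈ c l' → X p → X q

structure MaxSt (t c : ι → Finset V) : Prop where
  pst : PSt t c
  conn : Conn c
  max : ∀ c', PSt t c' → Conn c' → (used c').card ≤ (used c).card

theorem flip_cases {t c : Finset V} (ht : t.card = 3) (hs : c ⊆ t) (hc : c = ∅ ∨ c.card = 2)
    {p q : V} (hp : p ∈ t) (hq : q ∈ t) (hpq : p ≠ q) (hne : c ≠ {p, q}) :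
    symmDiff c {p, q} ⊆ t ∧ (symmDiff c {p, q}).card = 2 ∧ 
    ∃ x, x ≠ p ∧ x ≠ q ∧ t = {p, q, x} ∧
      ((c = ∅ ∧ symmDiff c {p, q} = {p, q}) ∨
        (c = {p, x} ∧ symmDiff c {p, q} = {q, x}) ∨
        (c = {q, x} ∧ symmDiff c {p, q} = {p, x})) := by
  obtain ⟨x, hx⟩ : ∃ x, x ∈ t \ {p, q} := by
    apply Finset.card_pos.mp
    have := Finset.le_card_sdiff ({p, q} : Finset V) t
    have h2 : ({p, q} : Finset V).card = 2 := Finset.card_pair hpq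
    omega
  simp only [Finset.mem_sdiff, Finset.mem_insert, Finset.mem_singleton, not_or] at hx
  obtain ⟨hxt, hxp, hxq⟩ := hx
  have h3 : ({p, q, x} : Finset V).card = 3 := by
    rw [Finset.card_eq_three]; exact ⟨p, q, x, hpq, Ne.symm hxp, Ne.symm hxq, rfl⟩
  have hte : t = {p, q, x} := by
    symm; apply Finset.eq_of_subset_of_card_le
    · intro y; simp only [Finset.mem_insert, Finset.mem_singleton]; rintro (rfl | rfl | rfl) <;> assumption
    · omega
  have key : (c = ∅ ∧ symmDiff c {p, q} = {p, q}) ∨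
        (c = {p, x} ∧ symmDiff c {p, q} = {q, x}) ∨
        (c = {q, x} ∧ symmDiff c {p, q} = {p, x}) := by
    rcases hc with hc | hc
    · left; subst hc; refine ⟨rfl, ?_⟩
      ext y; simp [Finset.mem_symmDiff]
    · right
      obtain ⟨a, b, hab, rfl⟩ := Finset.card_eq_two.mp hc
      have ha : a ∈ t := hs (by simp)
      have hb : b ∈ t := hs (by simp)
      rw [hte] at ha hb
      simp only [Finset.mem_insert, Finset.mem_singleton] at ha hb
      have e1 : ({q, x} : Finset V) = symmDiff {p, x} {p, q} := by
        ext y; simp only [Finset.mem_symmDiff, Finset.mem_insert, Finset.mem_singleton]; grind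
      have e2 : ({p, x} : Finset V) = symmDiff {q, x} {p, q} := by
        ext y; simp only [Finset.mem_symmDiff, Finset.mem_insert, Finset.mem_singleton]; grind
      rcases ha with rfl | rfl | rfl <;> rcases hb with rfl | rfl | rfl <;>
        first
        | exact absurd rfl hab
        | exact absurd rfl hne
        | exact absurd (Finset.pair_comm _ _) hne
        | exact Or.inl ⟨rfl, e1.symm⟩
        | exact Or.inr ⟨rfl, e2.symm⟩
        | (rw [Finset.pair_comm]; exact Or.inl ⟨rfl, e1.symm⟩)
        | (rw [Finset.pair_comm]; exact Or.inr ⟨rfl, e2.symm⟩)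
  refine ⟨?_, ?_, x, hxp, hxq, hte, key⟩
  · rw [hte]
    rcases key with ⟨_, h⟩ | ⟨_, h⟩ | ⟨_, h⟩ <;> rw [h] <;> intro y <;> simp <;> tauto
  · rcases key with ⟨_, h⟩ | ⟨_, h⟩ | ⟨_, h⟩ <;> rw [h] <;> apply Finset.card_pair <;> tauto

theorem chi_symm (s : Finset V) {p q : V} (hpq : p ≠ q) (v : V) :
    chi (symmDiff s {p, q}) v = chi s v + dl p v + dl q v := by
  have h2 : (1 : ZMod 2) + 1 = 0 := by decide
  unfold chi dl
  simp only [Finset.mem_symmDiff, Finset.mem_insert, Finset.mem_singleton]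
  by_cases h1 : v ∈ s <;> by_cases h3 : v = p <;> by_cases h4 : v = q <;> simp [h1, h3, h4, h2] <;> grind

theorem bal_fl (c : ι → Finset V) (i : ι) {p q : V} (hpq : p ≠ q) (v : V) :
    bal (fl c i p q) v = bal c v + dl p v + dl q v := by
  unfold bal
  rw [← Finset.add_sum_erase _ _ (Finset.mem_univ i), ← Finset.add_sum_erase Finset.univ (fun l => chi (c l) v) (Finset.mem_univ i)]
  have : ∑ x ∈ Finset.univ.erase i, chi (fl c i p q x) v = ∑ x ∈ Finset.univ.erase i, chi (c x) v := by
    apply Finset.sum_congr rfl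
    intro x hx
    simp [fl, Function.update, Finset.ne_of_mem_erase hx]
  rw [this]
  simp only [fl, Function.update_self, chi_symm _ hpq]
  ring

theorem fl_same (c : ι → Finset V) (i : ι) (p q : V) : fl c i p q i = symmDiff (c i) {p, q} := by
  simp [fl]
theorem fl_ne (c : ι → Finset V) {i l : ι} (p q : V) (h : l ≠ i) : fl c i p q l = c l := by
  simp [fl, h]

theorem unc_pair (a b : V) (X : V → Prop) : Unc {a, b} X ↔ (X a ↔ X b) := by
  unfold Unc
  simp only [Finset.mem_insert, Finset.mem_singleton, forall_eq_or_imp, forall_eq]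
  tauto

theorem unc_empty (X : V → Prop) : Unc ∅ X := by
  intro p hp; simp at hp

theorem chi_sum (X : V → Prop) [DecidablePred X] {a b : V} (hab : a ≠ b) :
    ∑ v ∈ Finset.univ.filter X, chi ({a, b} : Finset V) v = if (X a ↔ X b) then 0 else 1 := by
  have e : ∀ v, chi ({a, b} : Finset V) v = dl a v + dl b v := by
    intro v
    have := chi_symm (∅ : Finset V) hab v
    have h0 : symmDiff (∅ : Finset V) {a, b} = {a, b} := by
      ext y; simp [Finset.mem_symmDiff]
    rw [h0] at this
    rw [this]; simp [chi]
  have d : ∀ a, ∑ v ∈ Finset.univ.filter X, dl a v = if X a then 1 else 0 := by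
    intro a
    unfold dl
    rw [Finset.sum_ite_eq' ]
    simp
  have h2 : (1 : ZMod 2) + 1 = 0 := by decide
  rw [Finset.sum_congr rfl (fun v _ => e v), Finset.sum_add_distrib, d, d]
  by_cases ha : X a <;> by_cases hb : X b
  · rw [if_pos ha, if_pos hb, if_pos (by tauto)]; exact h2
  · rw [if_pos ha, if_neg hb, if_neg (by tauto)]; exact add_zero _
  · rw [if_neg ha, if_pos hb, if_neg (by tauto)]; exact zero_add _
  · rw [if_neg ha, if_neg hb, if_pos (by tauto)]; exact add_zero _

theorem cross_even {t c : ι → Finset V} (h : PSt t c) (X : V → Prop) :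
    ∃ s : Finset ι, (∀ l, l ∈ s ↔ ¬ Unc (c l) X) ∧ Even s.card := by
  classical
  refine ⟨Finset.univ.filter (fun l => ¬ Unc (c l) X), by simp, ?_⟩
  have h1 : ∑ v ∈ Finset.univ.filter X, bal c v = 0 := Finset.sum_eq_zero (fun v _ => h.even v)
  unfold bal at h1
  rw [Finset.sum_comm] at h1
  have h2 : ∀ l, ∑ v ∈ Finset.univ.filter X, chi (c l) v = if ¬ Unc (c l) X then 1 else 0 := by
    intro l
    rcases h.card l with h0 | h0
    · rw [h0, if_neg (not_not.mpr (unc_empty X))]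
      exact Finset.sum_eq_zero (fun v _ => by simp [chi])
    · obtain ⟨a, b, hab, he⟩ := Finset.card_eq_two.mp h0
      rw [he, chi_sum X hab]
      by_cases hh : X a ↔ X b
      · rw [if_pos hh, if_neg (not_not.mpr ((unc_pair a b X).mpr hh))]
      · rw [if_neg hh, if_pos (fun h => hh ((unc_pair a b X).mp h))]
  simp only [h2, Finset.sum_boole] at h1
  rw [ZMod.natCast_eq_zero_iff] at h1
  exact even_iff_two_dvd.mpr h1

theorem cross_not_one {t c : ι → Finset V} (h : PSt t c) (X : V → Prop) (n : ι)
    (hn : ∀ l, l ≠ n → Unc (c l) X) : Unc (c n) X := by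
  obtain ⟨s, hs, he⟩ := cross_even h X
  by_contra hc
  have : s = {n} := by
    ext l; simp only [hs, Finset.mem_singleton]
    constructor
    · intro h; by_contra h2; exact h (hn l h2)
    · rintro rfl; exact hc
  rw [this] at he; simp at he

theorem cross_not_three {t c : ι → Finset V} (h : PSt t c) (X : V → Prop) {i j k : ι}
    (hij : i ≠ j) (hik : i ≠ k) (hjk : j ≠ k)
    (hn : ∀ l, ¬ Unc (c l) X ↔ l = i ∨ l = j ∨ l = k) : False := by
  obtain ⟨s, hs, he⟩ := cross_even h X
  have : s = {i, j, k} := by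
    ext l; simp only [hs, hn, Finset.mem_insert, Finset.mem_singleton]
  rw [this, Finset.card_eq_three.mpr ⟨i, j, k, hij, hik, hjk, rfl⟩] at he
  revert he; decide

/-- three pairwise 2-cuts -/
theorem core {t c : ι → Finset V} (h : PSt t c) {X1 X2 X3 : V → Prop} {i j k : ι}
    (hij : i ≠ j) (hik : i ≠ k) (hjk : j ≠ k)
    (h3 : ∀ l, ¬ Unc (c l) X3 ↔ l = i ∨ l = j)
    (h2 : ∀ l, ¬ Unc (c l) X2 ↔ l = i ∨ l = k)
    (h1 : ∀ l, ¬ Unc (c l) X1 ↔ l = j ∨ l = k)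
    (pi : ∃ p ∈ c i, X2 p ↔ X3 p) (pj : ∃ p ∈ c j, X1 p ↔ X3 p) (pk : ∃ p ∈ c k, X1 p ↔ X2 p) :
    False := by
  refine cross_not_three h (fun v => (X1 v ↔ X2 v) ∧ (X2 v ↔ X3 v)) hij hik hjk ?_
  have pair : ∀ l, c l = ∅ ∨ ∃ a b, c l = {a, b} := by
    intro l; rcases h.card l with h | h
    · exact Or.inl h
    · obtain ⟨a, b, _, h⟩ := Finset.card_eq_two.mp h; exact Or.inr ⟨a, b, h⟩
  intro l
  have e1 := h1 l
  have e2 := h2 l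
  have e3 := h3 l
  clear h1 h2 h3
  rcases pair l with hl | ⟨a, b, hl⟩
  · rw [hl] at e1 e2 e3 ⊢
    have u1 := unc_empty X1
    have u2 := unc_empty X2
    have u3 := unc_empty X3
    have u4 := unc_empty (fun v => (X1 v ↔ X2 v) ∧ (X2 v ↔ X3 v))
    tauto
  · have ei : l = i → ((X2 a ↔ X3 a) ∨ (X2 b ↔ X3 b)) := by
      rintro rfl; rw [hl] at pi; simpa using pi
    have ej : l = j → ((X1 a ↔ X3 a) ∨ (X1 b ↔ X3 b)) := by
      rintro rfl; rw [hl] at pj; simpa using pj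
    have ek : l = k → ((X1 a ↔ X2 a) ∨ (X1 b ↔ X2 b)) := by
      rintro rfl; rw [hl] at pk; simpa using pk
    have n1 : l = i → ¬ (l = j) := by rintro rfl; exact hij
    have n2 : l = i → ¬ (l = k) := by rintro rfl; exact hik
    have n3 : l = j → ¬ (l = k) := by rintro rfl; exact hjk
    rw [hl, unc_pair] at e1 e2 e3
    rw [hl, unc_pair]
    clear pi pj pk pair hl h hij hik hjk
    generalize X1 a = A1 at *
    generalize X2 a = A2 at *
    generalize X3 a = A3 at *
    generalize X1 b = B1 at *
    generalize X2 b = B2 at *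
    generalize X3 b = B3 at *
    generalize (l = i) = I at *
    generalize (l = j) = J at *
    generalize (l = k) = K at *
    by_cases I <;> by_cases J <;> by_cases K <;> simp_all <;> grind

end CovEuler

set_option linter.unusedSectionVars false
set_option linter.all false
namespace CovEuler
variable {V ι : Type} [Fintype V] [DecidableEq V] [Fintype ι] [DecidableEq ι]

def InA (c : ι → Finset V) (v : V) : Prop := ∃ l, v ∈ c l
def Fixed (t c : ι → Finset V) (v d : V) : Prop := ∀ i, v ∈ t i → d ∈ t i → c i = {v, d}
structure QSt (t c : ι → Finset V) : Prop where
  sub : ∀ l, c l ⊆ t l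
  card : ∀ l, c l = ∅ ∨ (c l).card = 2

theorem PSt.q {t c : ι → Finset V} (h : PSt t c) : QSt t c := ⟨h.sub, h.card⟩
theorem QSt.p {t c : ι → Finset V} (h : QSt t c) (hb : ∀ v, bal c v = 0) : PSt t c :=
  ⟨h.sub, h.card, hb⟩

theorem QSt.fl {t c : ι → Finset V} (ht : ∀ l, (t l).card = 3) (h : QSt t c) {i : ι} {p q : V}
    (hp : p ∈ t i) (hq : q ∈ t i) (hpq : p ≠ q) : QSt t (fl c i p q) := by
  have key : CovEuler.fl c i p q i ⊆ t i ∧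
      (CovEuler.fl c i p q i = ∅ ∨ (CovEuler.fl c i p q i).card = 2) := by
    rw [fl_same]
    by_cases hc : c i = {p, q}
    · rw [hc, symmDiff_self]; simp
    · obtain ⟨h1, h2, _⟩ := flip_cases (ht i) (h.sub i) (h.card i) hp hq hpq hc
      exact ⟨h1, Or.inr h2⟩
  constructor
  · intro l
    by_cases hl : l = i
    · subst hl; exact key.1
    · rw [fl_ne _ _ _ hl]; exact h.sub l
  · intro l
    by_cases hl : l = i
    · subst hl; exact key.2
    · rw [fl_ne _ _ _ hl]; exact h.card l

theorem used_ge {t c : ι → Finset V} (ht : ∀ l, (t l).card = 3) (h : QSt t c) {i : ι} {p q : V}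
    (hp : p ∈ t i) (hq : q ∈ t i) (hpq : p ≠ q) (hne : c i ≠ {p, q}) :
    (used c).card ≤ (used (fl c i p q)).card := by
  apply Finset.card_le_card
  intro l hl
  simp only [used, Finset.mem_filter, Finset.mem_univ, true_and] at *
  by_cases e : l = i
  · subst e
    rw [fl_same]
    obtain ⟨_, h2, _⟩ := flip_cases (ht l) (h.sub l) (h.card l) hp hq hpq hne
    rw [← Finset.card_pos]; omega
  · rw [fl_ne _ _ _ e]; exact hl

theorem fl_empty {c : ι → Finset V} {i : ι} {p q : V} (h : c i = ∅) : fl c i p q i = {p, q} := by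
  rw [fl_same, h]; ext y; simp [Finset.mem_symmDiff]

theorem fl_rem {c : ι → Finset V} {i : ι} {p q : V} (h : c i = {p, q}) : fl c i p q i = ∅ := by
  rw [fl_same, h, symmDiff_self]; rfl

theorem used_new {c : ι → Finset V} {i : ι} {p q : V} (h : c i = ∅) :
    (used (fl c i p q)).card = (used c).card + 1 := by
  have : used (fl c i p q) = insert i (used c) := by
    ext l
    simp only [used, Finset.mem_filter, Finset.mem_univ, true_and, Finset.mem_insert]
    by_cases e : l = i
    · subst e; rw [fl_empty h]; simp
    · rw [fl_ne _ _ _ e]; simp [e]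
  rw [this, Finset.card_insert_of_notMem]
  simp [used, h]

theorem used_rem {c : ι → Finset V} {i : ι} {p q : V} (h : c i = {p, q}) :
    (used (fl c i p q)).card + 1 = (used c).card := by
  have : used c = insert i (used (fl c i p q)) := by
    ext l
    simp only [used, Finset.mem_filter, Finset.mem_univ, true_and, Finset.mem_insert]
    by_cases e : l = i
    · subst e; rw [h]; simp
    · rw [fl_ne _ _ _ e]; simp [e]
  rw [this, Finset.card_insert_of_notMem]
  simp [used, fl_rem h]

theorem dl_self (p v : V) : dl p v + dl p v = 0 := by
  unfold dl; split_ifs <;> decide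

theorem unc_not {s : Finset V} {X : V → Prop} (h : Unc s X) : Unc s (fun v => ¬ X v) :=
  fun p hp q hq hX hq' => hX (h q hq p hp hq')

theorem nconn_at {c : ι → Finset V} (h : ¬ Conn c) (z : V) :
    ∃ X : V → Prop, X z ∧ (∀ l, Unc (c l) X) ∧ (∃ l q, q ∈ c l ∧ ¬ X q) ∧ ∃ l q, q ∈ c l ∧ X q := by
  unfold Conn at h
  push Not at h
  obtain ⟨X, hX, l, l', p, q, hp, hq, h1, h2⟩ := h
  by_cases hz : X z
  · exact ⟨X, hz, hX, ⟨l', q, hq, h2⟩, l, p, hp, h1⟩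
  · exact ⟨fun v => ¬ X v, hz, fun l => unc_not (hX l), ⟨l, p, hp, fun h => h h1⟩, l', q, hq, h2⟩

theorem aug {t c H : ι → Finset V} (hM : MaxSt t c) (hP : PSt t H)
    (hu : (used c).card < (used H).card) (z : V) :
    ∃ X : V → Prop, X z ∧ (∀ l, Unc (H l) X) ∧ (∃ l q, q ∈ H l ∧ ¬ X q) := by
  have : ¬ Conn H := fun hC => by have := hM.max H hP hC; omega
  obtain ⟨X, h1, h2, h3, _⟩ := nconn_at this z
  exact ⟨X, h1, h2, h3⟩

theorem Conn.all {c : ι → Finset V} (h : Conn c) {X : V → Prop} (hX : ∀ l, Unc (c l) X) {z : V}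
    (hz : InA c z) (hXz : X z) : ∀ l, ∀ p ∈ c l, X p := by
  obtain ⟨m, hm⟩ := hz
  exact fun l p hp => h X hX m l z p hm hp hXz

theorem flip_unc {t c : ι → Finset V} (ht : ∀ l, (t l).card = 3) (h : QSt t c) {i : ι} {p q : V}
    (hp : p ∈ t i) (hq : q ∈ t i) (hpq : p ≠ q) (hne : c i ≠ {p, q}) {X : V → Prop}
    (hX : Unc (symmDiff (c i) {p, q}) X) :
    (c i = ∅ ∧ (X p ↔ X q)) ∨ (c i ≠ ∅ ∧ (Unc (c i) X ↔ (X p ↔ X q))) := by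
  obtain ⟨_, _, x, hx1, hx2, _, h1 | h1 | h1⟩ := flip_cases (ht i) (h.sub i) (h.card i) hp hq hpq hne
  · left; rw [h1.2, unc_pair] at hX; exact ⟨h1.1, hX⟩
  · right; rw [h1.2, unc_pair] at hX; rw [h1.1, unc_pair]; refine ⟨by simp, by tauto⟩
  · right; rw [h1.2, unc_pair] at hX; rw [h1.1, unc_pair]; refine ⟨by simp, by tauto⟩

theorem wit {t c : ι → Finset V} (ht : ∀ l, (t l).card = 3) (h : QSt t c) {i : ι} {p q : V}
    (hp : p ∈ t i) (hq : q ∈ t i) (hpq : p ≠ q) (hne : c i ≠ {p, q}) (h0 : c i ≠ ∅) :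
    ∃ x, x ≠ p ∧ x ≠ q ∧ t i = {p, q, x} ∧ (c i = {p, x} ∨ c i = {q, x}) := by
  obtain ⟨_, _, x, hx1, hx2, h3, h1 | h1 | h1⟩ := flip_cases (ht i) (h.sub i) (h.card i) hp hq hpq hne
  · exact absurd h1.1 h0
  · exact ⟨x, hx1, hx2, h3, Or.inl h1.1⟩
  · exact ⟨x, hx1, hx2, h3, Or.inr h1.1⟩

theorem third {t : Finset V} (ht : t.card = 3) {p q : V} (hp : p ∈ t) (hq : q ∈ t) (hpq : p ≠ q) :
    ∃ x, x ≠ p ∧ x ≠ q ∧ t = {p, q, x} := by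
  obtain ⟨_, _, x, h1, h2, h3, _⟩ := flip_cases ht (Finset.empty_subset t) (Or.inl rfl) hp hq hpq (by
    intro h; have := Finset.mem_insert_self p {q}; rw [← h] at this; simp at this)
  exact ⟨x, h1, h2, h3⟩

theorem symm_sub {s : Finset V} {p q y : V} (h : y ∈ symmDiff s {p, q}) : y ∈ s ∨ y = p ∨ y = q := by
  simp only [Finset.mem_symmDiff, Finset.mem_insert, Finset.mem_singleton] at h
  tauto

theorem fl_mem {c : ι → Finset V} {i l : ι} {p q y : V} (h : y ∈ fl c i p q l) :
    y ∈ c l ∨ y = p ∨ y = q := by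
  by_cases e : l = i
  · subst e; rw [fl_same] at h; exact symm_sub h
  · rw [fl_ne _ _ _ e] at h; exact Or.inl h

theorem cut {t c : ι → Finset V} (ht : ∀ l, (t l).card = 3) (hM : MaxSt t c) {f i j : ι}
    {v w d : V} (hf : c f = ∅) (hv : v ∈ t f) (hw : w ∈ t f) (hvw : v ≠ w) (hd : d ∉ t f)
    (hij : i ≠ j) (hvi : v ∈ t i) (hdi : d ∈ t i) (hi : c i ≠ {v, d})
    (hwj : w ∈ t j) (hdj : d ∈ t j) (hj : c j ≠ {w, d})
    (hA : InA c v ∨ InA c w ∨ InA c d) :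
    c i ≠ ∅ ∧ c j ≠ ∅ ∧ ∃ X : V → Prop, X d ∧ ¬ X v ∧ ¬ X w ∧ ∀ l, ¬ Unc (c l) X ↔ l = i ∨ l = j := by
  have hvd : v ≠ d := by rintro rfl; exact hd hv
  have hwd : w ≠ d := by rintro rfl; exact hd hw
  have hif : i ≠ f := by rintro rfl; exact hd hdi
  have hjf : j ≠ f := by rintro rfl; exact hd hdj
  have q0 := hM.pst.q
  have q1 : QSt t (fl c f v w) := q0.fl ht hv hw hvw
  have q2 : QSt t (fl (fl c f v w) i v d) := q1.fl ht hvi hdi hvd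
  have q3 : QSt t (fl (fl (fl c f v w) i v d) j w d) := q2.fl ht hwj hdj hwd
  have e1i : fl c f v w i = c i := fl_ne _ _ _ hif
  have e1j : fl c f v w j = c j := fl_ne _ _ _ hjf
  have e2j : fl (fl c f v w) i v d j = c j := by rw [fl_ne _ _ _ hij.symm, e1j]
  have u1 := used_new (p := v) (q := w) hf
  have u2 := used_ge ht q1 hvi hdi hvd (by rw [e1i]; exact hi)
  have u3 := used_ge ht q2 hwj hdj hwd (by rw [e2j]; exact hj)
  have hP := q3.p (by
    intro y
    rw [bal_fl _ _ hwd, bal_fl _ _ hvd, bal_fl _ _ hvw, hM.pst.even]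
    linear_combination dl_self v y + dl_self w y + dl_self d y)
  obtain ⟨X, hXd, hX, l0, y, hy, hXy⟩ := aug hM hP (by omega) d
  have Xf : X v ↔ X w := by
    have := hX f
    rwa [fl_ne _ _ _ hjf.symm, fl_ne _ _ _ hif.symm, fl_empty hf, unc_pair] at this
  have Xi := hX i
  rw [fl_ne _ _ _ hij, fl_same, e1i] at Xi
  have Xi := flip_unc ht q0 hvi hdi hvd hi Xi
  have Xj := hX j
  rw [fl_same, e2j] at Xj
  have Xj := flip_unc ht q0 hwj hdj hwd hj Xj
  have Xo : ∀ l, l ≠ i → l ≠ j → Unc (c l) X := by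
    intro l h1 h2
    by_cases h3 : l = f
    · rw [h3, hf]; exact unc_empty X
    · have := hX l
      rwa [fl_ne _ _ _ h2, fl_ne _ _ _ h1, fl_ne _ _ _ h3] at this
  by_cases hXv : X v
  · exfalso
    have Ui : Unc (c i) X := by
      rcases Xi with h | h
      · rw [h.1]; exact unc_empty X
      · exact h.2.mpr (iff_of_true hXv hXd)
    have Uj : Unc (c j) X := by
      rcases Xj with h | h
      · rw [h.1]; exact unc_empty X
      · exact h.2.mpr (iff_of_true (Xf.mp hXv) hXd)
    have Ua : ∀ l, Unc (c l) X := by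
      intro l
      by_cases h1 : l = i
      · rw [h1]; exact Ui
      · by_cases h2 : l = j
        · rw [h2]; exact Uj
        · exact Xo l h1 h2
    have all : ∀ l, ∀ p ∈ c l, X p := by
      rcases hA with h | h | h
      · exact hM.conn.all Ua h hXv
      · exact hM.conn.all Ua h (Xf.mp hXv)
      · exact hM.conn.all Ua h hXd
    have hXw := Xf.mp hXv
    apply hXy
    rcases fl_mem hy with h | h | h
    · rcases fl_mem h with h | h | h
      · rcases fl_mem h with h | h | h
        · exact all _ _ h
        · rw [h]; exact hXv
        · rw [h]; exact hXw
      · rw [h]; exact hXv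
      · rw [h]; exact hXd
    · rw [h]; exact hXw
    · rw [h]; exact hXd
  · have hXw : ¬ X w := fun h => hXv (Xf.mpr h)
    have Xi : c i ≠ ∅ ∧ ¬ Unc (c i) X := by
      rcases Xi with h | h
      · exact absurd (h.2.mpr hXd) hXv
      · exact ⟨h.1, fun h' => hXv ((h.2.mp h').mpr hXd)⟩
    have Xj : c j ≠ ∅ ∧ ¬ Unc (c j) X := by
      rcases Xj with h | h
      · exact absurd (h.2.mpr hXd) hXw
      · exact ⟨h.1, fun h' => hXw ((h.2.mp h').mpr hXd)⟩
    refine ⟨Xi.1, Xj.1, X, hXd, hXv, hXw, ?_⟩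
    intro l
    constructor
    · intro h; by_contra h2; push Not at h2; exact h (Xo l h2.1 h2.2)
    · rintro (rfl | rfl)
      · exact Xi.2
      · exact Xj.2

theorem coinc {t c : ι → Finset V} (ht : ∀ l, (t l).card = 3) (hM : MaxSt t c) {f h j : ι}
    {v w u d : V} (hf : c f = ∅) (hv : v ∈ t f) (hw : w ∈ t f) (hu : u ∈ t f)
    (hvw : v ≠ w) (huv : u ≠ v) (huw : u ≠ w) (hd : d ∉ t f)
    (hvh : v ∈ t h) (hwh : w ∈ t h) (hdh : d ∈ t h) (h1 : c h ≠ {v, d}) (h2 : c h ≠ {w, d})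
    (huj : u ∈ t j) (hdj : d ∈ t j) (hj : c j ≠ {u, d})
    (hA : InA c v ∨ InA c w ∨ InA c u ∨ InA c d) : False := by
  have hvd : v ≠ d := by rintro rfl; exact hd hv
  have hwd : w ≠ d := by rintro rfl; exact hd hw
  have hud : u ≠ d := by rintro rfl; exact hd hu
  have hhj : h ≠ j := by
    rintro rfl
    obtain ⟨x, hx1, hx2, hx3⟩ := third (ht h) hvh hwh hvw
    rw [hx3] at huj hdj
    simp only [Finset.mem_insert, Finset.mem_singleton] at huj hdj
    clear * - huj hdj huv huw hud hvd hwd; grind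
  have ha : c h ≠ ∅ := by
    by_cases hw' : InA c w
    · exact (cut ht hM hf hw hu huw.symm hd hhj hwh hdh h2 huj hdj hj (Or.inl hw')).1
    · exact (cut ht hM hf hv hu huv.symm hd hhj hvh hdh h1 huj hdj hj (by clear * - hA hw'; tauto)).1
  have hc : c h = {v, w} := by
    obtain ⟨x, hx1, hx2, hx3, hx⟩ := wit ht hM.pst.q hvh hdh hvd h1 ha
    have : w = x := by
      rw [hx3] at hwh
      simp only [Finset.mem_insert, Finset.mem_singleton] at hwh
      clear * - hwh hvw hwd; grind
    subst this
    rcases hx with hx | hx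
    · exact hx
    · rw [Finset.pair_comm] at hx; exact absurd hx h2
  obtain ⟨_, hj0, X, Xd, Xv, Xu, XX⟩ := cut ht hM hf hv hu huv.symm hd hhj hvh hdh h1 huj hdj hj
    (Or.inl ⟨h, by rw [hc]; simp⟩)
  obtain ⟨_, _, Y, Yd, Yw, Yu, YY⟩ := cut ht hM hf hw hu huw.symm hd hhj hwh hdh h2 huj hdj hj
    (Or.inl ⟨h, by rw [hc]; simp⟩)
  have c1 := (XX h).mpr (Or.inl rfl)
  have c2 := (YY h).mpr (Or.inl rfl)
  rw [hc, unc_pair] at c1 c2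
  have Un : ∀ l, l ≠ j → Unc (c l) (fun y => X y ↔ ¬ Y y) := by
    intro l hl
    by_cases e : l = h
    · rw [e, hc, unc_pair]; clear * - c1 c2 Xv Yw; tauto
    · have a1 : Unc (c l) X := by by_contra h'; exact ((XX l).mp h').elim e hl
      have a2 : Unc (c l) Y := by by_contra h'; exact ((YY l).mp h').elim e hl
      intro p hp q hq
      have b1 := a1 p hp q hq
      have b2 := a1 q hq p hp
      have b3 := a2 p hp q hq
      have b4 := a2 q hq p hp
      clear * - b1 b2 b3 b4; tauto
  have Uj := cross_not_one hM.pst _ j Un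
  have all := hM.conn.all (X := fun y => X y ↔ ¬ Y y) (by
    intro l; by_cases e : l = j
    · rw [e]; exact Uj
    · exact Un l e) (z := v) ⟨h, by rw [hc]; simp⟩ (by clear * - c1 c2 Xv Yw; tauto)
  obtain ⟨x, hx1, hx2, hx3, hx⟩ := wit ht hM.pst.q huj hdj hud hj hj0
  rcases hx with hx | hx
  · have := all j u (by rw [hx]; simp); clear * - this Xu Yu Xd Yd; tauto
  · have := all j d (by rw [hx]; simp); clear * - this Xu Yu Xd Yd; tauto

theorem fn {t c : ι → Finset V} (ht : ∀ l, (t l).card = 3) (hM : MaxSt t c) {f : ι}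
    {d : V} (hf : c f = ∅) (hd : d ∉ t f)
    (hA : (∃ v ∈ t f, InA c v) ∨ InA c d) : ∃ v ∈ t f, Fixed t c v d := by
  by_contra hcon
  push Not at hcon
  obtain ⟨v1, v2, v3, h12, h13, h23, hT⟩ := Finset.card_eq_three.mp (ht f)
  have m1 : v1 ∈ t f := by rw [hT]; simp
  have m2 : v2 ∈ t f := by rw [hT]; simp
  have m3 : v3 ∈ t f := by rw [hT]; simp
  have n1 : v1 ≠ d := by rintro rfl; exact hd m1
  have n2 : v2 ≠ d := by rintro rfl; exact hd m2
  have n3 : v3 ≠ d := by rintro rfl; exact hd m3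
  have w1 := hcon v1 m1
  have w2 := hcon v2 m2
  have w3 := hcon v3 m3
  unfold Fixed at w1 w2 w3
  push Not at w1 w2 w3
  obtain ⟨i1, a1, b1, c1⟩ := w1
  obtain ⟨i2, a2, b2, c2⟩ := w2
  obtain ⟨i3, a3, b3, c3⟩ := w3
  have hA' : InA c v1 ∨ InA c v2 ∨ InA c v3 ∨ InA c d := by
    rcases hA with ⟨v, hv, h⟩ | h
    · rw [hT] at hv; simp only [Finset.mem_insert, Finset.mem_singleton] at hv
      rcases hv with rfl | rfl | rfl <;> clear * - h <;> tauto
    · clear * - h; tauto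
  by_cases e12 : i1 = i2
  · subst e12
    exact coinc ht hM hf m1 m2 m3 h12 h13.symm h23.symm hd a1 a2 b1 c1 c2 a3 b3 c3 (by clear * - hA'; tauto)
  by_cases e13 : i1 = i3
  · subst e13
    exact coinc ht hM hf m1 m3 m2 h13 h12.symm h23 hd a1 a3 b1 c1 c3 a2 b2 c2 (by clear * - hA'; tauto)
  by_cases e23 : i2 = i3
  · subst e23
    exact coinc ht hM hf m2 m3 m1 h23 h12 h13 hd a2 a3 b2 c2 c3 a1 b1 c1 (by clear * - hA'; tauto)
  have k12 := cut ht hM hf m1 m2 h12 hd e12 a1 b1 c1 a2 b2 c2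
  have k13 := cut ht hM hf m1 m3 h13 hd e13 a1 b1 c1 a3 b3 c3
  have k23 := cut ht hM hf m2 m3 h23 hd e23 a2 b2 c2 a3 b3 c3
  have p1 : c i1 ≠ ∅ → v1 ∈ c i1 ∨ d ∈ c i1 := by
    intro h
    obtain ⟨x, _, _, _, hx | hx⟩ := wit ht hM.pst.q a1 b1 n1 c1 h <;> rw [hx] <;> simp
  have p2 : c i2 ≠ ∅ → v2 ∈ c i2 ∨ d ∈ c i2 := by
    intro h
    obtain ⟨x, _, _, _, hx | hx⟩ := wit ht hM.pst.q a2 b2 n2 c2 h <;> rw [hx] <;> simp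
  have p3 : c i3 ≠ ∅ → v3 ∈ c i3 ∨ d ∈ c i3 := by
    intro h
    obtain ⟨x, _, _, _, hx | hx⟩ := wit ht hM.pst.q a3 b3 n3 c3 h <;> rw [hx] <;> simp
  have q1 : c i1 ≠ ∅ → InA c v1 ∨ InA c d := fun h => (p1 h).imp (fun h => ⟨_, h⟩) (fun h => ⟨_, h⟩)
  have q2 : c i2 ≠ ∅ → InA c v2 ∨ InA c d := fun h => (p2 h).imp (fun h => ⟨_, h⟩) (fun h => ⟨_, h⟩)
  have q3 : c i3 ≠ ∅ → InA c v3 ∨ InA c d := fun h => (p3 h).imp (fun h => ⟨_, h⟩) (fun h => ⟨_, h⟩)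
  have A1 : InA c v1 ∨ InA c d := by
    rcases hA' with h | h | h | h
    · exact Or.inl h
    · exact q1 (k12 (by clear * - h; tauto)).1
    · exact q1 (k13 (by clear * - h; tauto)).1
    · exact Or.inr h
  have A2 : InA c v2 ∨ InA c d := q2 (k12 (by clear * - A1; tauto)).2.1
  obtain ⟨o1, o2, X3, X3d, X3a, X3b, hX3⟩ := k12 (by clear * - A1; tauto)
  obtain ⟨_, o3, X2, X2d, X2a, X2b, hX2⟩ := k13 (by clear * - A1; tauto)
  obtain ⟨_, _, X1, X1d, X1a, X1b, hX1⟩ := k23 (by clear * - A2; tauto)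
  refine core hM.pst e12 e13 e23 hX3 hX2 hX1 ?_ ?_ ?_
  · rcases p1 o1 with h | h
    · exact ⟨_, h, iff_of_false X2a X3a⟩
    · exact ⟨_, h, iff_of_true X2d X3d⟩
  · rcases p2 o2 with h | h
    · exact ⟨_, h, iff_of_false X1a X3b⟩
    · exact ⟨_, h, iff_of_true X1d X3d⟩
  · rcases p3 o3 with h | h
    · exact ⟨_, h, iff_of_false X1b X2b⟩
    · exact ⟨_, h, iff_of_true X1d X2d⟩

end CovEuler

set_option linter.unusedSectionVars false
set_option linter.all false
namespace CovEuler
variable {V ι : Type} [Fintype V] [DecidableEq V] [Fintype ι] [DecidableEq ι]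

structure Sit (t c : ι → Finset V) (f : ι) : Prop where
  ht : ∀ l, (t l).card = 3
  cov : ∀ p q, p ≠ q → ∃ l, p ∈ t l ∧ q ∈ t l
  M : MaxSt t c
  hf : c f = ∅
  hA : ∃ v ∈ t f, InA c v

theorem mem_pair {x a b : V} : x ∈ ({a, b} : Finset V) ↔ x = a ∨ x = b := by simp
theorem mem_trip {x a b e : V} : x ∈ ({a, b, e} : Finset V) ↔ x = a ∨ x = b ∨ x = e := by simp
theorem unc_of_eq {s : Finset V} {a b : V} (h : s = {a, b}) {X : V → Prop} :
    Unc s X ↔ (X a ↔ X b) := by rw [h, unc_pair]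

theorem r1a {t c : ι → Finset V} {f : ι} (S : Sit t c f) {v w : V} {i : ι} (hv : v ∈ t f)
    (hw : w ∈ t f) (hvw : v ≠ w) (hif : i ≠ f) (hvi : v ∈ t i) (hwi : w ∈ t i)
    (hA : c i ≠ ∅ ∨ InA c v ∨ InA c w) : c i = {v, w} := by
  by_contra hne
  have q0 := S.M.pst.q
  have q1 : QSt t (fl c f v w) := q0.fl S.ht hv hw hvw
  have q2 : QSt t (fl (fl c f v w) i v w) := q1.fl S.ht hvi hwi hvw
  have e1i : fl c f v w i = c i := fl_ne _ _ _ hif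
  have u1 := used_new (p := v) (q := w) S.hf
  have u2 := used_ge S.ht q1 hvi hwi hvw (by rw [e1i]; exact hne)
  have hP := q2.p (by
    intro y
    rw [bal_fl _ _ hvw, bal_fl _ _ hvw, S.M.pst.even]
    linear_combination dl_self v y + dl_self w y)
  obtain ⟨X, hXv, hX, l0, y, hy, hXy⟩ := aug S.M hP (by omega) v
  have hXw : X w := by
    have := hX f
    rw [fl_ne _ _ _ hif.symm, fl_empty S.hf, unc_pair] at this
    exact this.mp hXv
  have Xi := hX i
  rw [fl_same, e1i] at Xi
  have Xi := flip_unc S.ht q0 hvi hwi hvw hne Xi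
  have Ui : Unc (c i) X := by
    rcases Xi with h | h
    · rw [h.1]; exact unc_empty X
    · exact h.2.mpr (iff_of_true hXv hXw)
  have Ua : ∀ l, Unc (c l) X := by
    intro l
    by_cases h1 : l = i
    · rw [h1]; exact Ui
    · by_cases h2 : l = f
      · rw [h2, S.hf]; exact unc_empty X
      · have := hX l
        rwa [fl_ne _ _ _ h1, fl_ne _ _ _ h2] at this
  have hA' : InA c v ∨ InA c w := by
    rcases hA with h | h
    · obtain ⟨x, _, _, _, hx | hx⟩ := wit S.ht q0 hvi hwi hvw hne h
      · exact Or.inl ⟨i, by rw [hx]; simp⟩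
      · exact Or.inr ⟨i, by rw [hx]; simp⟩
    · exact h
  have all : ∀ l, ∀ p ∈ c l, X p := by
    rcases hA' with h | h
    · exact S.M.conn.all Ua h hXv
    · exact S.M.conn.all Ua h hXw
  apply hXy
  rcases fl_mem hy with h | h | h
  · rcases fl_mem h with h | h | h
    · exact all _ _ h
    · rw [h]; exact hXv
    · rw [h]; exact hXw
  · rw [h]; exact hXv
  · rw [h]; exact hXw

theorem r1 {t c : ι → Finset V} {f : ι} (S : Sit t c f) {v w : V} {i : ι} (hv : v ∈ t f)
    (hw : w ∈ t f) (hvw : v ≠ w) (hif : i ≠ f) (hvi : v ∈ t i) (hwi : w ∈ t i) : c i = {v, w} := by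
  by_cases hc : c i ≠ ∅ ∨ InA c v ∨ InA c w
  · exact r1a S hv hw hvw hif hvi hwi hc
  exfalso
  push Not at hc
  obtain ⟨hc0, hnv, hnw⟩ := hc
  obtain ⟨u, huv, huw, hT⟩ := third (S.ht f) hv hw hvw
  have hu : u ∈ t f := by rw [hT]; simp
  have uA : InA c u := by
    obtain ⟨z, hz, hzA⟩ := S.hA
    rw [hT, mem_trip] at hz
    rcases hz with rfl | rfl | rfl
    · exact absurd hzA hnv
    · exact absurd hzA hnw
    · exact hzA
  obtain ⟨x, hxv, hxw, hTi⟩ := third (S.ht i) hvi hwi hvw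
  have hx : x ∈ t i := by rw [hTi]; simp
  by_cases hxu : x = u
  · subst hxu
    have := r1a S hv hu huv.symm hif hvi hx (Or.inr (Or.inr uA))
    rw [hc0] at this
    exact absurd this.symm (by simp)
  have hxf : x ∉ t f := by
    rw [hT, mem_trip]; rintro (h | h | h)
    · exact hxv h
    · exact hxw h
    · exact hxu h
  have fx : Fixed t c u x := by
    obtain ⟨z, hz, hzF⟩ := fn S.ht S.M S.hf hxf (Or.inl S.hA)
    rw [hT, mem_trip] at hz
    rcases hz with rfl | rfl | rfl
    · have := hzF i hvi hx; rw [hc0] at this; exact absurd this.symm (by simp)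
    · have := hzF i hwi hx; rw [hc0] at this; exact absurd this.symm (by simp)
    · exact hzF
  obtain ⟨k, huk, hxk⟩ := S.cov u x (Ne.symm hxu)
  have ck := fx k huk hxk
  have hkf : k ≠ f := by rintro rfl; exact hxf hxk
  have hki : k ≠ i := by rintro rfl; rw [hc0] at ck; exact absurd ck.symm (by simp)
  have hux : u ≠ x := Ne.symm hxu
  have q0 := S.M.pst.q
  have q1 : QSt t (fl c k u x) := q0.fl S.ht huk hxk hux
  have q2 : QSt t (fl (fl c k u x) f u v) := q1.fl S.ht hu hv huv
  have q3 : QSt t (fl (fl (fl c k u x) f u v) i v x) := q2.fl S.ht hvi hx hxv.symm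
  have e1 : fl c k u x f = ∅ := by rw [fl_ne _ _ _ hkf.symm]; exact S.hf
  have e2 : fl (fl c k u x) f u v i = ∅ := by rw [fl_ne _ _ _ hif, fl_ne _ _ _ hki.symm]; exact hc0
  have u1 := used_rem ck
  have u2 := used_new (p := u) (q := v) e1
  have u3 := used_new (p := v) (q := x) e2
  have hP := q3.p (by
    intro y
    rw [bal_fl _ _ hxv.symm, bal_fl _ _ huv, bal_fl _ _ hux, S.M.pst.even]
    linear_combination dl_self v y + dl_self u y + dl_self x y)
  obtain ⟨X, hXu, hX, l0, y, hy, hXy⟩ := aug S.M hP (by omega) u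
  have hXv : X v := by
    have := hX f
    rw [fl_ne _ _ _ hif.symm, fl_empty e1, unc_pair] at this
    exact this.mp hXu
  have hXx : X x := by
    have := hX i
    rw [fl_empty e2, unc_pair] at this
    exact this.mp hXv
  have Ua : ∀ l, Unc (c l) X := by
    intro l
    by_cases h1 : l = i
    · rw [h1, hc0]; exact unc_empty X
    by_cases h2 : l = f
    · rw [h2, S.hf]; exact unc_empty X
    by_cases h3 : l = k
    · rw [h3, ck, unc_pair]; exact iff_of_true hXu hXx
    have := hX l
    rwa [fl_ne _ _ _ h1, fl_ne _ _ _ h2, fl_ne _ _ _ h3] at this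
  have all := S.M.conn.all Ua uA hXu
  apply hXy
  rcases fl_mem hy with h | h | h
  · rcases fl_mem h with h | h | h
    · rcases fl_mem h with h | h | h
      · exact all _ _ h
      · rw [h]; exact hXu
      · rw [h]; exact hXx
    · rw [h]; exact hXu
    · rw [h]; exact hXv
  · rw [h]; exact hXv
  · rw [h]; exact hXx

structure Sing (t c : ι → Finset V) (f : ι) (a b e g : V) (m1 m2 : ι) : Prop where
  S : Sit t c f
  tf : t f = {a, b, e}
  ab : a ≠ b
  ae : a ≠ e
  be : b ≠ e
  hg : g ∉ t f
  hm : m1 ≠ m2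
  a1 : a ∈ t m1
  g1 : g ∈ t m1
  n1 : c m1 ≠ {a, g}
  b2 : b ∈ t m2
  g2 : g ∈ t m2
  n2 : c m2 ≠ {b, g}

namespace Sing
variable {t c : ι → Finset V} {f : ι} {a b e g : V} {m1 m2 : ι}

theorem symm (H : Sing t c f a b e g m1 m2) : Sing t c f b a e g m2 m1 :=
  ⟨H.S, by rw [H.tf]; exact Finset.insert_comm _ _ _, H.ab.symm, H.be, H.ae, H.hg, H.hm.symm, H.b2, H.g2, H.n2, H.a1, H.g1, H.n1⟩

theorem af (H : Sing t c f a b e g m1 m2) : a ∈ t f := by rw [H.tf]; simp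
theorem bf (H : Sing t c f a b e g m1 m2) : b ∈ t f := by rw [H.tf]; simp
theorem ef (H : Sing t c f a b e g m1 m2) : e ∈ t f := by rw [H.tf]; simp
theorem ag (H : Sing t c f a b e g m1 m2) : a ≠ g := fun h => H.hg (h ▸ H.af)
theorem bg (H : Sing t c f a b e g m1 m2) : b ≠ g := fun h => H.hg (h ▸ H.bf)
theorem eg (H : Sing t c f a b e g m1 m2) : e ≠ g := fun h => H.hg (h ▸ H.ef)
theorem m1f (H : Sing t c f a b e g m1 m2) : m1 ≠ f := fun h => H.hg (h ▸ H.g1)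
theorem m2f (H : Sing t c f a b e g m1 m2) : m2 ≠ f := fun h => H.hg (h ▸ H.g2)

theorem fix (H : Sing t c f a b e g m1 m2) : Fixed t c e g := by
  obtain ⟨z, hz, hzF⟩ := fn H.S.ht H.S.M H.S.hf H.hg (Or.inl H.S.hA)
  rw [H.tf, mem_trip] at hz
  rcases hz with rfl | rfl | rfl
  · exact absurd (hzF _ H.a1 H.g1) H.n1
  · exact absurd (hzF _ H.b2 H.g2) H.n2
  · exact hzF

theorem not_k1 (H : Sing t c f a b e g m1 m2) {k : ι} (hk : c k = {e, g}) : a ∉ t k := by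
  intro ha
  have ek : e ∈ t k := H.S.M.pst.sub k (by rw [hk]; simp)
  have gk : g ∈ t k := H.S.M.pst.sub k (by rw [hk]; simp)
  have hkf : k ≠ f := fun h => H.hg (h ▸ gk)
  have := r1 H.S H.af H.ef H.ae hkf ha ek
  have h2 : a ∈ c k := by rw [this]; simp
  rw [hk, mem_pair] at h2
  exact h2.elim H.ae H.ag

theorem facts (H : Sing t c f a b e g m1 m2) {k : ι} (hk : c k = {e, g}) :
    k ≠ m1 ∧ k ≠ m2 ∧ c m1 ≠ ∅ ∧ c m2 ≠ ∅ ∧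
    ∃ X : V → Prop, X g ∧ ¬ X a ∧ ¬ X b ∧ X e ∧ ∀ l, ¬ Unc (c l) X ↔ l = m1 ∨ l = m2 := by
  have k1 : k ≠ m1 := fun h => H.not_k1 hk (h ▸ H.a1)
  have k2 : k ≠ m2 := fun h => H.symm.not_k1 hk (h ▸ H.b2)
  obtain ⟨u1, u2, X, Xg, Xa, Xb, hX⟩ := cut H.S.ht H.S.M H.S.hf H.af H.bf H.ab H.hg H.hm H.a1 H.g1 H.n1
    H.b2 H.g2 H.n2 (Or.inr (Or.inr ⟨k, by rw [hk]; simp⟩))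
  refine ⟨k1, k2, u1, u2, X, Xg, Xa, Xb, ?_, hX⟩
  have : Unc (c k) X := by
    by_contra h; exact ((hX k).mp h).elim k1 k2
  exact ((unc_of_eq hk).mp this).mpr Xg

theorem hask (H : Sing t c f a b e g m1 m2) : ∃ k, c k = {e, g} := by
  obtain ⟨k, h1, h2⟩ := H.S.cov e g H.eg
  exact ⟨k, H.fix k h1 h2⟩

theorem mixed (H : Sing t c f a b e g m1 m2) (hin : a ∈ c m1) (hout : g ∈ c m2) :
    ∃ x2 l1, c m2 = {g, x2} ∧ c l1 = {a, x2} ∧ l1 ≠ m1 ∧ ¬ InA c b := by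
  obtain ⟨k, hk⟩ := H.hask
  obtain ⟨k1, k2, u1, u2, X, Xg, Xa, Xb, Xe, hX⟩ := H.facts hk
  have S := H.S
  obtain ⟨x2, x2b, x2g, tm2, cm2⟩ := wit S.ht S.M.pst.q H.b2 H.g2 H.bg H.n2 u2
  have cm2 : c m2 = {g, x2} := by
    rcases cm2 with h | h
    · rw [h, mem_pair] at hout; exact hout.elim (fun h => absurd h.symm H.bg) (fun h => absurd h.symm x2g)
    · exact h
  obtain ⟨x1, x1a, x1g, tm1, cm1⟩ := wit S.ht S.M.pst.q H.a1 H.g1 H.ag H.n1 u1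
  have cm1 : c m1 = {a, x1} := by
    rcases cm1 with h | h
    · exact h
    · rw [h, mem_pair] at hin; exact hin.elim (fun h => absurd h H.ag) (fun h => absurd h.symm x1a)
  have Xx2 : ¬ X x2 := by
    have := (hX m2).mpr (Or.inr rfl)
    rw [unc_of_eq cm2] at this
    exact fun h => this (iff_of_true Xg h)
  have Xx1 : X x1 := by
    have := (hX m1).mpr (Or.inl rfl)
    rw [unc_of_eq cm1] at this
    by_contra h; exact this (iff_of_false Xa h)
  have x2m : x2 ∈ t m2 := by rw [tm2]; simp
  have x2a : x2 ≠ a := by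
    rintro rfl
    have := r1 S H.af H.bf H.ab H.m2f x2m H.b2
    rw [this, mem_pair] at hout
    exact hout.elim (fun h => H.ag h.symm) (fun h => H.bg h.symm)
  have x2e : x2 ≠ e := by rintro rfl; exact Xx2 Xe
  have x2f : x2 ∉ t f := by
    rw [H.tf, mem_trip]; rintro (h | h | h)
    · exact x2a h
    · exact x2b h
    · exact x2e h
  have nfe : ¬ Fixed t c e x2 := by
    intro h
    obtain ⟨l, l1, l2⟩ := S.cov e x2 x2e.symm
    have cl := h l l1 l2
    have : ¬ Unc (c l) X := by
      rw [unc_of_eq cl]; exact fun h => Xx2 (h.mp Xe)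
    rcases (hX l).mp this with rfl | rfl
    · rw [cl, mem_pair] at hin
      exact hin.elim H.ae (fun h => x2a h.symm)
    · rw [cl, mem_pair] at hout
      exact hout.elim (fun h => H.eg h.symm) (fun h => x2g h.symm)
  have fa : Fixed t c a x2 := by
    obtain ⟨z, hz, hzF⟩ := fn S.ht S.M S.hf x2f (Or.inl S.hA)
    rw [H.tf, mem_trip] at hz
    rcases hz with rfl | rfl | rfl
    · exact hzF
    · have := hzF m2 H.b2 x2m
      rw [this, mem_pair] at hout
      exact hout.elim (fun h => absurd h.symm H.bg) (fun h => absurd h.symm x2g)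
    · exact absurd hzF nfe
  obtain ⟨l1, al1, xl1⟩ := S.cov a x2 x2a.symm
  have cl1 := fa l1 al1 xl1
  have l1m1 : l1 ≠ m1 := by
    rintro rfl
    have : x2 ∈ c l1 := by rw [cl1]; simp
    rw [cm1, mem_pair] at this
    rcases this with h | h
    · exact x2a h
    · rw [h] at Xx2; exact Xx2 Xx1
  have l1m2 : l1 ≠ m2 := by
    rintro rfl
    have : a ∈ c l1 := by rw [cl1]; simp
    rw [cm2, mem_pair] at this
    exact this.elim H.ag (fun h => x2a h.symm)
  refine ⟨x2, l1, cm2, cl1, l1m1, ?_⟩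
  unfold Fixed at nfe
  push Not at nfe
  obtain ⟨n, en, xn, cn⟩ := nfe
  have m2n : m2 ≠ n := by
    rintro rfl
    rw [tm2, mem_trip] at en
    rcases en with h | h | h
    · exact H.be h.symm
    · exact H.eg h
    · exact x2e h.symm
  have nf : n ≠ f := fun h => x2f (h ▸ xn)
  have l1n : l1 ≠ n := by
    rintro rfl
    have := r1 S H.af H.ef H.ae nf al1 en
    have h2 : x2 ∈ c l1 := by rw [cl1]; simp
    rw [this, mem_pair] at h2
    exact h2.elim x2a x2e
  have m1n : m1 ≠ n := by
    rintro rfl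
    rw [tm1, mem_trip] at xn
    rcases xn with h | h | h
    · exact x2a h
    · exact x2g h
    · rw [h] at Xx2; exact Xx2 Xx1
  obtain ⟨_, _, Y, Yx, Yb, Ye, hY⟩ := cut S.ht S.M S.hf H.bf H.ef H.be x2f m2n H.b2 x2m
    (by intro h; rw [h, mem_pair] at hout
        exact hout.elim (fun h => absurd h.symm H.bg) (fun h => absurd h.symm x2g))
    en xn cn (Or.inr (Or.inr ⟨m2, by rw [cm2]; simp⟩))
  have Ya : Y a := by
    have : Unc (c l1) Y := by
      by_contra h; exact ((hY l1).mp h).elim l1m2 l1n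
    exact ((unc_of_eq cl1).mp this).mpr Yx
  have Yx1 : Y x1 := by
    have : Unc (c m1) Y := by
      by_contra h; exact ((hY m1).mp h).elim H.hm m1n
    exact ((unc_of_eq cm1).mp this).mp Ya
  have Un : ∀ l, l ≠ n → Unc (c l) (fun v => ¬ X v ∧ ¬ Y v) := by
    intro l hl
    by_cases h1 : l = m1
    · rw [h1, unc_of_eq cm1]; exact iff_of_false (fun h => h.2 Ya) (fun h => h.2 Yx1)
    by_cases h2 : l = m2
    · rw [h2, unc_of_eq cm2]; exact iff_of_false (fun h => h.1 Xg) (fun h => h.2 Yx)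
    have b1 : Unc (c l) X := by by_contra h; exact ((hX l).mp h).elim h1 h2
    have b2 : Unc (c l) Y := by by_contra h; exact ((hY l).mp h).elim h2 hl
    intro p hp q hq hh
    exact ⟨fun h => hh.1 (b1 q hq p hp h), fun h => hh.2 (b2 q hq p hp h)⟩
  have Unn := cross_not_one S.M.pst _ n Un
  intro hbA
  have := S.M.conn.all (X := fun v => ¬ X v ∧ ¬ Y v) (by
    intro l; by_cases e : l = n
    · rw [e]; exact Unn
    · exact Un l e) hbA ⟨Xb, Yb⟩ m1 a hin
  exact this.2 Ya

theorem rew (H : Sing t c f a b e g m1 m2) {k : ι} (hk : c k = {e, g}) :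
    (∃ c1 y, Sing t c1 k g e y b m2 f ∧ c1 m2 = c m2 ∧ e ∈ c1 f ∧ (g ∈ c1 m1 ↔ g ∉ c m1)) ∨
    (∃ W : V → Prop, W g ∧ ¬ W a ∧ ¬ W e ∧ ∀ l, ¬ Unc (c l) W ↔ l = m1 ∨ l = k) := by
  obtain ⟨k1, k2, u1, u2, _⟩ := H.facts hk
  have S := H.S
  have ek : e ∈ t k := S.M.pst.sub k (by rw [hk]; simp)
  have gk : g ∈ t k := S.M.pst.sub k (by rw [hk]; simp)
  have hkf : k ≠ f := fun h => H.hg (h ▸ gk)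
  have q0 := S.M.pst.q
  have q1 : QSt t (fl c k e g) := q0.fl S.ht ek gk H.eg
  have q2 : QSt t (fl (fl c k e g) f a e) := q1.fl S.ht H.af H.ef H.ae
  have q3 : QSt t (fl (fl (fl c k e g) f a e) m1 a g) := q2.fl S.ht H.a1 H.g1 H.ag
  have e1 : fl c k e g f = ∅ := by rw [fl_ne _ _ _ hkf.symm]; exact S.hf
  have e2 : fl (fl c k e g) f a e m1 = c m1 := by rw [fl_ne _ _ _ H.m1f, fl_ne _ _ _ k1.symm]
  have u1' := used_rem hk
  have u2' := used_new (p := a) (q := e) e1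
  have u3' := used_ge S.ht q2 H.a1 H.g1 H.ag (by rw [e2]; exact H.n1)
  have hP := q3.p (by
    intro y
    rw [bal_fl _ _ H.ag, bal_fl _ _ H.ae, bal_fl _ _ H.eg, S.M.pst.even]
    linear_combination dl_self a y + dl_self e y + dl_self g y)
  have cf : fl (fl (fl c k e g) f a e) m1 a g f = {a, e} := by
    rw [fl_ne _ _ _ H.m1f.symm, fl_empty e1]
  have ck : fl (fl (fl c k e g) f a e) m1 a g k = ∅ := by
    rw [fl_ne _ _ _ k1, fl_ne _ _ _ hkf, fl_rem hk]
  have cm1 : fl (fl (fl c k e g) f a e) m1 a g m1 = symmDiff (c m1) {a, g} := by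
    rw [fl_same, e2]
  have co : ∀ l, l ≠ m1 → l ≠ f → l ≠ k → fl (fl (fl c k e g) f a e) m1 a g l = c l := by
    intro l h1 h2 h3
    rw [fl_ne _ _ _ h1, fl_ne _ _ _ h2, fl_ne _ _ _ h3]
  have hmem : ∀ l, ∀ y ∈ fl (fl (fl c k e g) f a e) m1 a g l, y ∈ c l ∨ y = a ∨ y = e ∨ y = g := by
    intro l y hy
    rcases fl_mem hy with h | h | h
    · rcases fl_mem h with h | h | h
      · rcases fl_mem h with h | h | h
        · exact Or.inl h
        · exact Or.inr (Or.inr (Or.inl h))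
        · exact Or.inr (Or.inr (Or.inr h))
      · exact Or.inr (Or.inl h)
      · exact Or.inr (Or.inr (Or.inl h))
    · exact Or.inr (Or.inl h)
    · exact Or.inr (Or.inr (Or.inr h))
  have hu : (used c).card ≤ (used (fl (fl (fl c k e g) f a e) m1 a g)).card := by omega
  clear e1 e2 u1' u2' u3' q1 q2 q3
  generalize fl (fl (fl c k e g) f a e) m1 a g = c1 at *
  by_cases hC : Conn c1
  · left
    obtain ⟨y, hy1, hy2, hy3⟩ := third (S.ht k) gk ek H.eg.symm
    have hM : MaxSt t c1 := ⟨hP, hC, fun c' h1 h2 => (S.M.max c' h1 h2).trans hu⟩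
    have cm2 : c1 m2 = c m2 := co m2 H.hm.symm H.m2f k2.symm
    refine ⟨c1, y, ?_, cm2, ?_, ?_⟩
    · refine ⟨⟨S.ht, S.cov, hM, ck, e, ek, f, by rw [cf]; simp⟩, hy3, H.eg.symm, hy1.symm, hy2.symm,
        H.symm.not_k1 hk, H.m2f, H.g2, H.b2, ?_, H.ef, H.bf, ?_⟩
      · rw [cm2, Finset.pair_comm]; exact H.n2
      · rw [cf]; intro h
        have : a ∈ ({a, e} : Finset V) := by simp
        rw [h, mem_pair] at this
        exact this.elim H.ae H.ab
    · rw [cf]; simp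
    · rw [cm1, Finset.mem_symmDiff]; simp
  · right
    obtain ⟨W, Wg, hW, ⟨l0, y, hy, hWy⟩, _⟩ := nconn_at hC g
    have Wae : W a ↔ W e := (unc_of_eq cf).mp (hW f)
    have Wm := hW m1
    rw [cm1] at Wm
    have Wm : Unc (c m1) W ↔ (W a ↔ W g) := by
      rcases flip_unc S.ht q0 H.a1 H.g1 H.ag H.n1 Wm with h | h
      · exact absurd h.1 u1
      · exact h.2
    have Wk : Unc (c k) W ↔ (W e ↔ W g) := unc_of_eq hk
    have Wo : ∀ l, l ≠ m1 → l ≠ k → Unc (c l) W := by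
      intro l h1 h2
      by_cases h3 : l = f
      · rw [h3, S.hf]; exact unc_empty W
      · rw [← co l h1 h3 h2]; exact hW l
    by_cases Wa : W a
    · exfalso
      have all := S.M.conn.all (X := W) (by
        intro l
        by_cases h1 : l = m1
        · rw [h1]; exact Wm.mpr (iff_of_true Wa Wg)
        by_cases h2 : l = k
        · rw [h2]; exact Wk.mpr (iff_of_true (Wae.mp Wa) Wg)
        exact Wo l h1 h2) (z := g) ⟨k, by rw [hk]; simp⟩ Wg
      apply hWy
      rcases hmem _ _ hy with h | h | h | h
      · exact all _ _ h
      · rw [h]; exact Wa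
      · rw [h]; exact Wae.mp Wa
      · rw [h]; exact Wg
    · have We : ¬ W e := fun h => Wa (Wae.mpr h)
      refine ⟨W, Wg, Wa, We, ?_⟩
      intro l
      constructor
      · intro h; by_contra h2; push Not at h2; exact h (Wo l h2.1 h2.2)
      · rintro (rfl | rfl)
        · exact fun h => Wa ((Wm.mp h).mpr Wg)
        · exact fun h => We ((Wk.mp h).mpr Wg)

theorem lab (H : Sing t c f a b e g m1 m2) : (a ∈ c m1 ∧ g ∉ c m1) ∨ (a ∉ c m1 ∧ g ∈ c m1) := by
  obtain ⟨k, hk⟩ := H.hask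
  obtain ⟨_, _, u1, _⟩ := H.facts hk
  obtain ⟨x1, x1a, x1g, tm1, cm1⟩ := wit H.S.ht H.S.M.pst.q H.a1 H.g1 H.ag H.n1 u1
  have := H.ag
  rcases cm1 with h | h
  · left; rw [h, mem_pair, mem_pair]
    exact ⟨Or.inl rfl, fun h => h.elim (fun h => this h.symm) (fun h => x1g h.symm)⟩
  · right; rw [h, mem_pair, mem_pair]
    exact ⟨fun h => h.elim this (fun h => x1a h.symm), Or.inl rfl⟩

theorem rew_or (H : Sing t c f a b e g m1 m2) {k : ι} (hk : c k = {e, g}) :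
    (∃ c1 y, Sing t c1 k g e y b m2 f ∧ c1 m2 = c m2 ∧ e ∈ c1 f ∧ (g ∈ c1 m1 ↔ g ∉ c m1)) ∨
    (∃ c1 y, Sing t c1 k g e y a m1 f ∧ c1 m1 = c m1 ∧ e ∈ c1 f ∧ (g ∈ c1 m2 ↔ g ∉ c m2)) := by
  rcases H.rew hk with h | ⟨W, Wg, Wa, We, hW⟩
  · exact Or.inl h
  rcases H.symm.rew hk with h | ⟨W', Wg', Wb', We', hW'⟩
  · exact Or.inr h
  exfalso
  obtain ⟨k1, k2, u1, u2, X, Xg, Xa, Xb, Xe, hX⟩ := H.facts hk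
  refine core H.S.M.pst H.hm k1.symm k2.symm hX hW hW' ?_ ?_ ?_
  · rcases H.lab with h | h
    · exact ⟨a, h.1, iff_of_false Wa Xa⟩
    · exact ⟨g, h.2, iff_of_true Wg Xg⟩
  · rcases H.symm.lab with h | h
    · exact ⟨b, h.1, iff_of_false Wb' Xb⟩
    · exact ⟨g, h.2, iff_of_true Wg' Xg⟩
  · exact ⟨e, by rw [hk]; simp, iff_of_false We' We⟩

end Sing

theorem sp1 {t c : ι → Finset V} {f : ι} {a b e g : V} {m1 m2 : ι}
    (H : Sing t c f a b e g m1 m2) (h1 : a ∈ c m1) (h2 : b ∈ c m2) : False := by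
  obtain ⟨k, hk⟩ := H.hask
  have g1 : g ∉ c m1 := by rcases H.lab with h | h; exacts [h.2, absurd h1 h.1]
  have g2 : g ∉ c m2 := by rcases H.symm.lab with h | h; exacts [h.2, absurd h2 h.1]
  rcases H.rew_or hk with ⟨c1, y, H1, e1, e2, e3⟩ | ⟨c1, y, H1, e1, e2, e3⟩
  · obtain ⟨_, _, _, _, _, hn⟩ := H1.symm.mixed e2 (by rw [e1]; exact h2)
    exact hn ⟨m1, e3.mpr g1⟩
  · obtain ⟨_, _, _, _, _, hn⟩ := H1.symm.mixed e2 (by rw [e1]; exact h1)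
    exact hn ⟨m2, e3.mpr g2⟩

theorem sp2 {t c : ι → Finset V} {f : ι} {a b e g : V} {m1 m2 : ι}
    (H : Sing t c f a b e g m1 m2) (h1 : g ∈ c m1) (h2 : g ∈ c m2) : False := by
  obtain ⟨k, hk⟩ := H.hask
  rcases H.rew_or hk with ⟨c1, y, H1, e1, e2, e3⟩ | ⟨c1, y, H1, e1, e2, e3⟩
  · exact sp1 H1 (by rw [e1]; exact h2) e2
  · exact sp1 H1 (by rw [e1]; exact h1) e2

theorem sp3 {t c : ι → Finset V} {f : ι} {a b e g : V} {m1 m2 : ι}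
    (H : Sing t c f a b e g m1 m2) (h1 : a ∈ c m1) (h2 : g ∈ c m2) : False := by
  obtain ⟨k, hk⟩ := H.hask
  obtain ⟨k1, k2, _⟩ := H.facts hk
  rcases H.rew hk with ⟨c1, y, H1, e1, e2, e3⟩ | ⟨W, Wg, Wa, We, hW⟩
  · exact sp1 H1 (by rw [e1]; exact h2) e2
  · obtain ⟨x2, l1, cm2, cl1, l1m1, _⟩ := H.mixed h1 h2
    have u2 : Unc (c m2) W := by
      by_contra h; exact ((hW m2).mp h).elim H.hm.symm k2.symm
    have Wx := ((unc_of_eq cm2).mp u2).mp Wg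
    have : ¬ Unc (c l1) W := by
      rw [unc_of_eq cl1]; exact fun h => Wa (h.mpr Wx)
    rcases (hW l1).mp this with h | h
    · exact l1m1 h
    · rw [h] at cl1
      have h3 : a ∈ c k := by rw [cl1]; simp
      rw [hk, mem_pair] at h3
      exact h3.elim H.ae H.ag

theorem no_sing {t c : ι → Finset V} {f : ι} {a b e g : V} {m1 m2 : ι}
    (H : Sing t c f a b e g m1 m2) : False := by
  rcases H.lab with h | h <;> rcases H.symm.lab with h' | h'
  · exact sp1 H h.1 h'.1
  · exact sp3 H h.1 h'.2
  · exact sp3 H.symm h'.1 h.2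
  · exact sp2 H h.2 h'.2

theorem lemS {t c : ι → Finset V} {f : ι} (S : Sit t c f) {v w d : V} {m1 m2 : ι}
    (hv : v ∈ t f) (hw : w ∈ t f) (hvw : v ≠ w) (hd : d ∉ t f)
    (a1 : v ∈ t m1) (g1 : d ∈ t m1) (n1 : c m1 ≠ {v, d})
    (b2 : w ∈ t m2) (g2 : d ∈ t m2) (n2 : c m2 ≠ {w, d}) : m1 = m2 := by
  by_contra hne
  obtain ⟨u, huv, huw, hT⟩ := third (S.ht f) hv hw hvw
  exact no_sing ⟨S, hT, hvw, huv.symm, huw.symm, hd, hne, a1, g1, n1, b2, g2, n2⟩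

end CovEuler

set_option linter.unusedSectionVars false
set_option linter.all false
namespace CovEuler
variable {V ι : Type} [Fintype V] [DecidableEq V] [Fintype ι] [DecidableEq ι]

theorem phi {t c : ι → Finset V} {f : ι} (S : Sit t c f) {p d : V} (hp : p ∈ t f) (hd : d ∉ t f)
    (hF : Fixed t c p d) : ∃ a k, a ∉ t f ∧ a ≠ p ∧ a ≠ d ∧ t k = {p, d, a} ∧ c k = {p, d} ∧
      ¬ Fixed t c p a ∧ ∀ v ∈ t f, v ≠ p → Fixed t c v a := by
  have hpd : p ≠ d := fun h => hd (h ▸ hp)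
  obtain ⟨k, pk, dk⟩ := S.cov p d hpd
  obtain ⟨a, ap, ad, tk⟩ := third (S.ht k) pk dk hpd
  have ck := hF k pk dk
  have ak : a ∈ t k := by rw [tk]; simp
  have kf : k ≠ f := fun h => hd (h ▸ dk)
  have dck : d ∈ c k := by rw [ck]; simp
  have af : a ∉ t f := by
    intro h
    have := r1 S hp h ap.symm kf pk ak
    rw [this, mem_pair] at dck
    exact dck.elim (fun h => hpd h.symm) (fun h => ad h.symm)
  have nk : c k ≠ {p, a} := by
    intro h
    rw [h, mem_pair] at dck
    exact dck.elim (fun h => hpd h.symm) (fun h => ad h.symm)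
  refine ⟨a, k, af, ap, ad, tk, ck, fun h => nk (h k pk ak), ?_⟩
  intro v hv hvp m vm am
  by_contra hne
  have := lemS S hp hv hvp.symm af pk ak nk vm am hne
  rw [← this, tk, mem_trip] at vm
  rcases vm with h | h | h
  · exact hvp h
  · rw [h] at hv; exact hd hv
  · rw [h] at hv; exact af hv

theorem inj {t c : ι → Finset V} {f : ι} (S : Sit t c f) {p d d' a v : V} {k k' : ι} (hp : p ∈ t f)
    (hd : d ∉ t f) (hd' : d' ∉ t f) (hdd : d ≠ d') (haf : a ∉ t f) (had : a ≠ d) (had' : a ≠ d')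
    (tk : t k = {p, d, a}) (ck : c k = {p, d}) (tk' : t k' = {p, d', a}) (ck' : c k' = {p, d'})
    (hFa : ∀ v ∈ t f, v ≠ p → Fixed t c v a)
    (hv : v ∈ t f) (hvp : v ≠ p) (hnF : ¬ Fixed t c v d) : False := by
  unfold Fixed at hnF
  push Not at hnF
  obtain ⟨m, vm, dm, nm⟩ := hnF
  have ne : ∀ {x y}, x ∈ t f → y ∉ t f → x ≠ y := fun h1 h2 h => h2 (h ▸ h1)
  have pd := ne hp hd
  have pd' := ne hp hd'
  have pa := ne hp haf
  have vd := ne hv hd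
  have pk : p ∈ t k := by rw [tk]; simp
  have dk : d ∈ t k := by rw [tk]; simp
  have ak : a ∈ t k := by rw [tk]; simp
  have pk' : p ∈ t k' := by rw [tk']; simp
  have dk' : d' ∈ t k' := by rw [tk']; simp
  have ak' : a ∈ t k' := by rw [tk']; simp
  have nk : ∀ {x}, x ∈ t f → x ≠ p → x ∉ t k := by
    intro x hx hxp h
    rw [tk, mem_trip] at h
    rcases h with h | h | h
    · exact hxp h
    · exact ne hx hd h
    · exact ne hx haf h
  have nk' : ∀ {x}, x ∈ t f → x ≠ p → x ∉ t k' := by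
    intro x hx hxp h
    rw [tk', mem_trip] at h
    rcases h with h | h | h
    · exact hxp h
    · exact ne hx hd' h
    · exact ne hx haf h
  have kk' : k ≠ k' := by
    intro h
    have : d' ∈ t k := h ▸ dk'
    rw [tk, mem_trip] at this
    rcases this with h | h | h
    · exact pd' h.symm
    · exact hdd h.symm
    · exact had' h.symm
  have mk : m ≠ k := fun h => nk hv hvp (h ▸ vm)
  have mk' : m ≠ k' := fun h => nk' hv hvp (h ▸ vm)
  have mf : m ≠ f := fun h => hd (h ▸ dm)
  have kf : k ≠ f := fun h => hd (h ▸ dk)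
  have kf' : k' ≠ f := fun h => hd' (h ▸ dk')
  obtain ⟨w, wp, wv, tf⟩ := third (S.ht f) hp hv hvp.symm
  have hw : w ∈ t f := by rw [tf]; simp
  have nck : c k ≠ {d, a} := by
    intro h
    have : p ∈ c k := by rw [ck]; simp
    rw [h, mem_pair] at this
    exact this.elim pd pa
  have nck' : c k' ≠ {p, a} := by
    intro h
    have : d' ∈ c k' := by rw [ck']; simp
    rw [h, mem_pair] at this
    exact this.elim (fun h => pd' h.symm) (fun h => had' h.symm)
  have q0 := S.M.pst.q
  have q1 : QSt t (fl c k d a) := q0.fl S.ht dk ak had.symm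
  have q2 : QSt t (fl (fl c k d a) k' p a) := q1.fl S.ht pk' ak' pa
  have q3 : QSt t (fl (fl (fl c k d a) k' p a) f p v) := q2.fl S.ht hp hv hvp.symm
  have q4 : QSt t (fl (fl (fl (fl c k d a) k' p a) f p v) m v d) := q3.fl S.ht vm dm vd
  have e1 : fl c k d a k' = c k' := fl_ne _ _ _ kk'.symm
  have e2 : fl (fl c k d a) k' p a f = ∅ := by rw [fl_ne _ _ _ kf'.symm, fl_ne _ _ _ kf.symm, S.hf]
  have e3 : fl (fl (fl c k d a) k' p a) f p v m = c m := by
    rw [fl_ne _ _ _ mf, fl_ne _ _ _ mk', fl_ne _ _ _ mk]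
  have u1 := used_ge S.ht q0 dk ak had.symm nck
  have u2 := used_ge S.ht q1 pk' ak' pa (by rw [e1]; exact nck')
  have u3 := used_new (p := p) (q := v) e2
  have u4 := used_ge S.ht q3 vm dm vd (by rw [e3]; exact nm)
  have hP := q4.p (by
    intro y
    rw [bal_fl _ _ vd, bal_fl _ _ hvp.symm, bal_fl _ _ pa, bal_fl _ _ had.symm, S.M.pst.even]
    linear_combination dl_self a y + dl_self d y + dl_self p y + dl_self v y)
  obtain ⟨X, Xp, hX, l0, y, hy, hXy⟩ := aug S.M hP (by omega) p
  have Xv : X v := by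
    have := hX f
    rw [fl_ne _ _ _ mf.symm, fl_empty e2, unc_pair] at this
    exact this.mp Xp
  have Xa : X a := by
    have := hX k
    rw [fl_ne _ _ _ mk.symm, fl_ne _ _ _ kf, fl_ne _ _ _ kk', fl_same] at this
    rcases flip_unc S.ht q0 dk ak had.symm nck this with h | h
    · have h2 := h.1; rw [ck] at h2; exact absurd h2 (by simp)
    · have h2 := h.2
      rw [unc_of_eq ck] at h2
      clear * - h2 Xp
      tauto
  have Xd' : X d' := by
    have := hX k'
    rw [fl_ne _ _ _ mk'.symm, fl_ne _ _ _ kf', fl_same, e1] at this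
    rcases flip_unc S.ht q0 pk' ak' pa nck' this with h | h
    · have h2 := h.1; rw [ck'] at h2; exact absurd h2 (by simp)
    · have h2 := h.2
      rw [unc_of_eq ck'] at h2
      clear * - h2 Xp Xa
      tauto
  have Xo : ∀ l, l ≠ k → l ≠ k' → l ≠ m → Unc (c l) X := by
    intro l h1 h2 h3
    by_cases h4 : l = f
    · rw [h4, S.hf]; exact unc_empty X
    · have := hX l
      rwa [fl_ne _ _ _ h3, fl_ne _ _ _ h4, fl_ne _ _ _ h2, fl_ne _ _ _ h1] at this
  have Xm := hX m
  rw [fl_same, e3] at Xm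
  have Xm := flip_unc S.ht q0 vm dm vd nm Xm
  have edge : ∀ z, z ∉ t f → Fixed t c w z → (X w ↔ X z) := by
    intro z hz hF
    obtain ⟨l, wl, zl⟩ := S.cov w z (ne hw hz)
    have cl := hF l wl zl
    have lm : l ≠ m := by
      rintro rfl
      have h1 := r1 S hv hw wv.symm mf vm wl
      have h2 : z ∈ c l := by rw [cl]; simp
      rw [h1, mem_pair] at h2
      exact h2.elim (fun h => ne hv hz h.symm) (fun h => ne hw hz h.symm)
    exact (unc_of_eq cl).mp (Xo l (fun h => nk hw wp (h ▸ wl)) (fun h => nk' hw wp (h ▸ wl)) lm)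
  have Xw : X w := (edge a haf (hFa w hw wp)).mpr Xa
  have Xd : X d := by
    by_cases hF : Fixed t c w d
    · exact (edge d hd hF).mp Xw
    · unfold Fixed at hF
      push Not at hF
      obtain ⟨m', wm, dm', nm'⟩ := hF
      have := lemS S hv hw wv.symm hd vm dm nm wm dm' nm'
      subst this
      have cm := r1 S hv hw wv.symm mf vm wm
      rcases Xm with h | h
      · exact h.2.mp Xv
      · exact (h.2.mp ((unc_of_eq cm).mpr (iff_of_true Xv Xw))).mp Xv
  have all := S.M.conn.all (X := X) (by
    intro l
    by_cases h1 : l = k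
    · rw [h1, unc_of_eq ck]; exact iff_of_true Xp Xd
    by_cases h2 : l = k'
    · rw [h2, unc_of_eq ck']; exact iff_of_true Xp Xd'
    by_cases h3 : l = m
    · rw [h3]
      rcases Xm with h | h
      · rw [h.1]; exact unc_empty X
      · exact h.2.mpr (iff_of_true Xv Xd)
    exact Xo l h1 h2 h3) (z := p) ⟨k, by rw [ck]; simp⟩ Xp
  apply hXy
  rcases fl_mem hy with h | h | h
  · rcases fl_mem h with h | h | h
    · rcases fl_mem h with h | h | h
      · rcases fl_mem h with h | h | h
        · exact all _ _ h
        · rw [h]; exact Xd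
        · rw [h]; exact Xa
      · rw [h]; exact Xp
      · rw [h]; exact Xa
    · rw [h]; exact Xp
    · rw [h]; exact Xv
  · rw [h]; exact Xv
  · rw [h]; exact Xd

theorem count {t c : ι → Finset V} {f : ι} (S : Sit t c f) {d0 : V} (hd0 : d0 ∉ t f) : False := by
  classical
  obtain ⟨v1, v2, v3, h12, h13, h23, tf⟩ := Finset.card_eq_three.mp (S.ht f)
  let σ : V → V := fun x => if x = v1 then v2 else if x = v2 then v3 else v1
  have s1 : σ v1 = v2 := by simp [σ]
  have s2 : σ v2 = v3 := by simp [σ, h12.symm]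
  have s3 : σ v3 = v1 := by simp [σ, h13.symm, h23.symm]
  have σm : ∀ x ∈ t f, σ x ∈ t f ∧ σ x ≠ x ∧ σ (σ x) ≠ x ∧ σ (σ x) ≠ σ x := by
    intro x hx
    rw [tf, mem_trip] at hx
    rcases hx with rfl | rfl | rfl
    · rw [s1, s2, tf]; exact ⟨by simp, h12.symm, h13.symm, h23.symm⟩
    · rw [s2, s3, tf]; exact ⟨by simp, h23.symm, h12, h13⟩
    · rw [s3, s1, tf]; exact ⟨by simp, h13, h23, h12.symm⟩
  have σi : ∀ x ∈ t f, ∀ y ∈ t f, σ x = σ y → x = y := by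
    intro x hx y hy h
    rw [tf, mem_trip] at hx hy
    rcases hx with rfl | rfl | rfl <;> rcases hy with rfl | rfl | rfl <;>
      simp only [s1, s2, s3] at h <;> first | rfl | exact absurd h (by assumption) | exact absurd h.symm (by assumption)
  let P : Finset (V × V) := Finset.univ.filter (fun z => z.2 ∈ t f ∧ z.1 ∉ t f ∧ Fixed t c z.2 z.1 ∧
    ∃ v ∈ t f, ¬ Fixed t c v z.1)
  let N : Finset (V × V) := Finset.univ.filter (fun z => z.2 ∈ t f ∧ z.1 ∉ t f ∧ ¬ Fixed t c z.2 z.1 ∧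
    ∀ v ∈ t f, v ≠ z.2 → Fixed t c v z.1)
  have hP : ∀ d p, (d, p) ∈ P ↔ p ∈ t f ∧ d ∉ t f ∧ Fixed t c p d ∧ ∃ v ∈ t f, ¬ Fixed t c v d := by
    intro d p; simp [P]
  have hN : ∀ a p, (a, p) ∈ N ↔ p ∈ t f ∧ a ∉ t f ∧ ¬ Fixed t c p a ∧ ∀ v ∈ t f, v ≠ p → Fixed t c v a := by
    intro d p; simp [N]
  have ph : ∀ z : V × V, ∃ a, z.2 ∈ t f → z.1 ∉ t f → Fixed t c z.2 z.1 → ∃ k,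
      a ∉ t f ∧ a ≠ z.2 ∧ a ≠ z.1 ∧ t k = {z.2, z.1, a} ∧ c k = {z.2, z.1} ∧
      ¬ Fixed t c z.2 a ∧ ∀ v ∈ t f, v ≠ z.2 → Fixed t c v a := by
    intro z
    by_cases h : z.2 ∈ t f ∧ z.1 ∉ t f ∧ Fixed t c z.2 z.1
    · obtain ⟨a, k, hh⟩ := phi S h.1 h.2.1 h.2.2
      exact ⟨a, fun _ _ _ => ⟨k, hh⟩⟩
    · exact ⟨z.1, fun h1 h2 h3 => absurd ⟨h1, h2, h3⟩ h⟩
  choose φ hφ using ph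
  have le : P.card ≤ N.card := by
    apply Finset.card_le_card_of_injOn (fun z => (φ z, z.2))
    · rintro ⟨d, p⟩ hz
      obtain ⟨z1, z2, z3, z4⟩ := (hP d p).mp hz
      obtain ⟨k, k1, k2, k3, k4, k5, k6, k7⟩ := hφ (d, p) z1 z2 z3
      exact (hN _ _).mpr ⟨z1, k1, k6, k7⟩
    · rintro ⟨d, p⟩ hz ⟨d', p'⟩ hz' he
      simp only [Prod.mk.injEq] at he
      obtain ⟨he, rfl⟩ := he
      obtain ⟨z1, z2, z3, v, hv, hvF⟩ := (hP d p).mp hz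
      obtain ⟨z1', z2', z3', z4'⟩ := (hP d' p).mp hz'
      obtain ⟨k, k1, k2, k3, k4, k5, k6, k7⟩ := hφ (d, p) z1 z2 z3
      obtain ⟨k', k1', k2', k3', k4', k5', k6', k7'⟩ := hφ (d', p) z1 z2' z3'
      rw [← he] at k3' k4'
      by_contra hne
      have hdd : d ≠ d' := fun h => hne (by rw [h])
      exact inj S z1 z2 z2' hdd k1 k3 k3' k4 k5 k4' k5' k7 hv (by rintro rfl; exact hvF z3) hvF
  have im : N.image (fun z => (z.1, σ z.2)) = P := by
    apply Finset.eq_of_subset_of_card_le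
    · intro z hz
      obtain ⟨⟨a, p⟩, h1, rfl⟩ := Finset.mem_image.mp hz
      obtain ⟨z1, z2, z3, z4⟩ := (hN a p).mp h1
      exact (hP _ _).mpr ⟨(σm p z1).1, z2, z4 _ (σm p z1).1 (σm p z1).2.1, p, z1, z3⟩
    · rw [Finset.card_image_of_injOn]
      · exact le
      · rintro ⟨a, p⟩ hz ⟨a', p'⟩ hz' he
        simp only [Prod.mk.injEq] at he
        rw [he.1, σi p ((hN a p).mp hz).1 p' ((hN a' p').mp hz').1 he.2]
  obtain ⟨p, hp, hF⟩ := fn S.ht S.M S.hf hd0 (Or.inl S.hA)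
  obtain ⟨a, k, k1, k2, k3, k4, k5, k6, k7⟩ := phi S hp hd0 hF
  have h1 := σm p hp
  have h2 := σm _ h1.1
  have : (a, σ (σ p)) ∈ P := (hP _ _).mpr ⟨h2.1, k1, k7 _ h2.1 h1.2.2.1, p, hp, k6⟩
  rw [← im] at this
  obtain ⟨⟨b, q⟩, hb, he⟩ := Finset.mem_image.mp this
  simp only [Prod.mk.injEq] at he
  obtain ⟨rfl, he⟩ := he
  have hq := (hN b q).mp hb
  have := σi q hq.1 _ h1.1 he
  rw [this] at hq
  exact hq.2.2.1 (k7 _ h1.1 h1.2.1)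

theorem dbl {t : ι → Finset V} (ht : ∀ l, (t l).card = 3) {f j : ι} {p p' : V} (hfj : f ≠ j)
    (hpp : p ≠ p') (h1 : p ∈ t f) (h2 : p' ∈ t f) (h3 : p ∈ t j) (h4 : p' ∈ t j) :
    ∃ c, PSt t c ∧ Conn c ∧ ∃ l, (c l).Nonempty := by
  have q0 : QSt t (fun _ => ∅) := ⟨fun l => Finset.empty_subset _, fun l => Or.inl rfl⟩
  have q1 : QSt t (fl (fun _ => ∅) f p p') := q0.fl ht h1 h2 hpp
  have q2 : QSt t (fl (fl (fun _ => ∅) f p p') j p p') := q1.fl ht h3 h4 hpp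
  have e : fl (fl (fun _ => ∅) f p p') j p p' f = {p, p'} := by
    rw [fl_ne _ _ _ hfj, fl_empty (c := fun _ => ∅) rfl]
  refine ⟨_, q2.p ?_, ?_, f, by rw [e]; simp⟩
  · intro y
    rw [bal_fl _ _ hpp, bal_fl _ _ hpp]
    have : bal (fun _ : ι => (∅ : Finset V)) y = 0 := by simp [bal, chi]
    rw [this]
    linear_combination dl_self p y + dl_self p' y
  · intro X hX l l' x y hx hy hXx
    have := hX f
    rw [e, unc_pair] at this
    have hx : x = p ∨ x = p' := by
      rcases fl_mem hx with h | h
      · rcases fl_mem h with h | h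
        · exact absurd h (Finset.notMem_empty _)
        · exact h
      · exact h
    have hy : y = p ∨ y = p' := by
      rcases fl_mem hy with h | h
      · rcases fl_mem h with h | h
        · exact absurd h (Finset.notMem_empty _)
        · exact h
      · exact h
    rcases hx with rfl | rfl <;> rcases hy with rfl | rfl <;> clear * - this hXx <;> tauto

theorem init {t : ι → Finset V} (ht : ∀ l, (t l).card = 3)
    (cov : ∀ p q, p ≠ q → ∃ l, p ∈ t l ∧ q ∈ t l) {f i : ι} (hi : i ≠ f) :
    ∃ c, PSt t c ∧ Conn c ∧ ∃ l, (c l).Nonempty := by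
  obtain ⟨p, p', v3, hpp, h13, h23, tf⟩ := Finset.card_eq_three.mp (ht f)
  have pf : p ∈ t f := by rw [tf]; simp
  have pf' : p' ∈ t f := by rw [tf]; simp
  by_cases hq : ∃ q, q ∉ t f
  · obtain ⟨q, hq⟩ := hq
    have pq : p ≠ q := fun h => hq (h ▸ pf)
    have pq' : p' ≠ q := fun h => hq (h ▸ pf')
    obtain ⟨j, pj, qj⟩ := cov p q pq
    obtain ⟨j', pj', qj'⟩ := cov p' q pq'
    have fj : f ≠ j := by rintro rfl; exact hq qj
    have fj' : f ≠ j' := by rintro rfl; exact hq qj'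
    by_cases hj : j = j'
    · subst hj
      exact dbl ht fj hpp pf pf' pj pj'
    have q0 : QSt t (fun _ => ∅) := ⟨fun l => Finset.empty_subset _, fun l => Or.inl rfl⟩
    have q1 : QSt t (fl (fun _ => ∅) f p p') := q0.fl ht pf pf' hpp
    have q2 : QSt t (fl (fl (fun _ => ∅) f p p') j p q) := q1.fl ht pj qj pq
    have q3 : QSt t (fl (fl (fl (fun _ => ∅) f p p') j p q) j' p' q) := q2.fl ht pj' qj' pq'
    have e : fl (fl (fl (fun _ => ∅) f p p') j p q) j' p' q f = {p, p'} := by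
      rw [fl_ne _ _ _ fj', fl_ne _ _ _ fj, fl_empty (c := fun _ => ∅) rfl]
    have e2 : fl (fl (fl (fun _ => ∅) f p p') j p q) j' p' q j = {p, q} := by
      rw [fl_ne _ _ _ hj, fl_empty (by rw [fl_ne _ _ _ fj.symm])]
    refine ⟨_, q3.p ?_, ?_, f, by rw [e]; simp⟩
    · intro y
      rw [bal_fl _ _ pq', bal_fl _ _ pq, bal_fl _ _ hpp]
      have : bal (fun _ : ι => (∅ : Finset V)) y = 0 := by simp [bal, chi]
      rw [this]
      linear_combination dl_self p y + dl_self p' y + dl_self q y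
    · intro X hX l l' x y hx hy hXx
      have a1 := hX f
      rw [e, unc_pair] at a1
      have a2 := hX j
      rw [e2, unc_pair] at a2
      have key : ∀ l x, x ∈ fl (fl (fl (fun _ => ∅) f p p') j p q) j' p' q l → x = p ∨ x = p' ∨ x = q := by
        intro l x hx
        rcases fl_mem hx with h | h | h
        · rcases fl_mem h with h | h | h
          · rcases fl_mem h with h | h | h
            · exact absurd h (Finset.notMem_empty _)
            · exact Or.inl h
            · exact Or.inr (Or.inl h)
          · exact Or.inl h
          · exact Or.inr (Or.inr h)
        · exact Or.inr (Or.inl h)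
        · exact Or.inr (Or.inr h)
      rcases key _ _ hx with rfl | rfl | rfl <;> rcases key _ _ hy with rfl | rfl | rfl <;>
        clear * - a1 a2 hXx <;> tauto
  · push Not at hq
    have : t i = t f := Finset.eq_of_subset_of_card_le (fun x _ => hq x) (by rw [ht, ht])
    exact dbl ht hi.symm hpp pf pf' (by rw [this]; exact pf) (by rw [this]; exact pf')

theorem main_state {t : ι → Finset V} (ht : ∀ l, (t l).card = 3)
    (cov : ∀ p q, p ≠ q → ∃ l, p ∈ t l ∧ q ∈ t l) (hι : ∀ f : ι, ∃ i, i ≠ f) (f0 : ι) :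
    ∃ c, PSt t c ∧ Conn c ∧ ∀ l, c l ≠ ∅ := by
  classical
  obtain ⟨i0, hi0⟩ := hι f0
  obtain ⟨c0, p0, k0, l0, hl0⟩ := init ht cov hi0
  obtain ⟨c, hc, hmax⟩ := Finset.exists_max_image
    (Finset.univ.filter (fun c : ι → Finset V => PSt t c ∧ Conn c)) (fun c => (used c).card)
    ⟨c0, by simp [p0, k0]⟩
  simp only [Finset.mem_filter, Finset.mem_univ, true_and] at hc hmax
  have hM : MaxSt t c := ⟨hc.1, hc.2, fun c' h1 h2 => hmax c' ⟨h1, h2⟩⟩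
  refine ⟨c, hc.1, hc.2, ?_⟩
  by_contra hcon
  push Not at hcon
  obtain ⟨f, hf⟩ := hcon
  obtain ⟨a, aA⟩ : ∃ a, InA c a := by
    have h1 : 0 < (used c0).card := Finset.card_pos.mpr ⟨l0, by simp [used, hl0]⟩
    have h2 := hmax c0 ⟨p0, k0⟩
    obtain ⟨l, hl⟩ := Finset.card_pos.mp (h1.trans_le h2)
    simp only [used, Finset.mem_filter, Finset.mem_univ, true_and] at hl
    obtain ⟨a, ha⟩ := hl
    exact ⟨a, l, ha⟩
  have hA : ∃ v ∈ t f, InA c v := by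
    by_cases haf : a ∈ t f
    · exact ⟨a, haf, aA⟩
    · obtain ⟨v, hv, hF⟩ := fn ht hM hf haf (Or.inr aA)
      obtain ⟨l, h1, h2⟩ := cov v a (by rintro rfl; exact haf hv)
      exact ⟨v, hv, l, by rw [hF l h1 h2]; simp⟩
  have S : Sit t c f := ⟨ht, cov, hM, hf, hA⟩
  by_cases hd : ∃ d, d ∉ t f
  · obtain ⟨d, hd⟩ := hd
    exact count S hd
  · push Not at hd
    obtain ⟨i, hi⟩ := hι f
    have hti : t i = t f := Finset.eq_of_subset_of_card_le (fun x _ => hd x) (by rw [ht, ht])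
    obtain ⟨v1, v2, v3, h12, h13, h23, tf⟩ := Finset.card_eq_three.mp (ht f)
    have m1 : v1 ∈ t f := by rw [tf]; simp
    have m2 : v2 ∈ t f := by rw [tf]; simp
    have m3 : v3 ∈ t f := by rw [tf]; simp
    have a1 := r1 S m1 m2 h12 hi (by rw [hti]; exact m1) (by rw [hti]; exact m2)
    have a2 := r1 S m1 m3 h13 hi (by rw [hti]; exact m1) (by rw [hti]; exact m3)
    have : v3 ∈ c i := by rw [a2]; simp
    rw [a1, mem_pair] at this
    exact this.elim (fun h => h13 h.symm) (fun h => h23 h.symm)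

end CovEuler

set_option linter.unusedSectionVars false
set_option linter.all false
namespace CovEuler
variable {V ι : Type} [Fintype V] [DecidableEq V] [Fintype ι] [DecidableEq ι]

inductive Tr (c : ι → Finset V) : V → V → List ι → Prop
  | nil (u : V) : Tr c u u []
  | cons {u x w : V} {l : ι} {L : List ι} (h : c l = {u, x}) (hne : u ≠ x) (T : Tr c x w L) :
      Tr c u w (l :: L)

theorem Tr.append {c : ι → Finset V} {u x w : V} {L L' : List ι} (h : Tr c u x L) (h' : Tr c x w L') :
    Tr c u w (L ++ L') := by
  induction h with
  | nil u => exact h'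
  | cons h hne T ih => exact Tr.cons h hne (ih h')

theorem Tr.visit {c : ι → Finset V} {u w : V} {L : List ι} (h : Tr c u w L) {l : ι} {p : V}
    (hl : l ∈ L) (hp : p ∈ c l) : ∃ L1 L2, L = L1 ++ L2 ∧ Tr c u p L1 ∧ Tr c p w L2 := by
  induction h with
  | nil u => exact absurd hl (List.not_mem_nil)
  | @cons u x w l' L hc hne T ih =>
    rcases List.mem_cons.mp hl with rfl | hl
    · rw [hc, mem_pair] at hp
      rcases hp with rfl | rfl
      · exact ⟨[], l :: L, rfl, Tr.nil _, Tr.cons hc hne T⟩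
      · exact ⟨[l], L, rfl, Tr.cons hc hne (Tr.nil _), T⟩
    · obtain ⟨L1, L2, e, T1, T2⟩ := ih hl
      exact ⟨l' :: L1, L2, by rw [e]; rfl, Tr.cons hc hne T1, T2⟩

theorem chi_pair {a b : V} (hab : a ≠ b) (v : V) : chi ({a, b} : Finset V) v = dl a v + dl b v := by
  have := chi_symm (∅ : Finset V) hab v
  have h0 : symmDiff (∅ : Finset V) {a, b} = {a, b} := by
    ext y; simp [Finset.mem_symmDiff]
  rw [h0] at this
  rw [this]; simp [chi]

theorem Tr.par {c : ι → Finset V} {u w : V} {L : List ι} (h : Tr c u w L) (v : V) :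
    (L.map (fun l => chi (c l) v)).sum = dl u v + dl w v := by
  induction h with
  | nil u => simp [dl_self]
  | @cons u x w l' L hc hne T ih =>
    rw [List.map_cons, List.sum_cons, ih, hc, chi_pair hne]
    linear_combination dl_self x v

theorem pairOf {t c : ι → Finset V} (hP : PSt t c) {l : ι} {u : V} (h : u ∈ c l) :
    ∃ x, x ≠ u ∧ c l = {x, u} := by
  rcases hP.card l with h0 | h0
  · rw [h0] at h; exact absurd h (Finset.notMem_empty _)
  · obtain ⟨a, b, hab, e⟩ := Finset.card_eq_two.mp h0
    rw [e, mem_pair] at h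
    rcases h with rfl | rfl
    · exact ⟨b, hab.symm, by rw [e, Finset.pair_comm]⟩
    · exact ⟨a, hab, e⟩

theorem extend {t c : ι → Finset V} (hP : PSt t c) (hC : Conn c) (hall : ∀ l, c l ≠ ∅)
    {u w : V} {L : List ι} (T : Tr c u w L) (hn : L.Nodup) (hbad : ¬ (u = w ∧ ∀ l, l ∈ L)) :
    ∃ u' w' L', Tr c u' w' L' ∧ L'.Nodup ∧ L'.length = L.length + 1 := by
  by_cases huw : u = w
  · subst huw
    have : ∃ l0, l0 ∉ L := by
      by_contra h; push Not at h; exact hbad ⟨rfl, h⟩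
    obtain ⟨l0, hl0⟩ := this
    have key : ∃ l v L1 L2, l ∉ L ∧ v ∈ c l ∧ L.Perm (L2 ++ L1) ∧ Tr c v v (L2 ++ L1) := by
      rcases L with _ | ⟨l1, L⟩
      · obtain ⟨v, hv⟩ := Finset.nonempty_iff_ne_empty.mpr (hall l0)
        exact ⟨l0, v, [], [], hl0, hv, List.Perm.refl _, Tr.nil v⟩
      · by_contra hcon
        have hout : ∀ l, l ∉ l1 :: L → ∀ v ∈ c l,
            ¬ ∃ L1 L2, l1 :: L = L1 ++ L2 ∧ Tr c u v L1 ∧ Tr c v u L2 := by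
          rintro l hl v hv ⟨L1, L2, e, T1, T2⟩
          exact hcon ⟨l, v, L1, L2, hl, hv, by rw [e]; exact List.perm_append_comm, T2.append T1⟩
        obtain ⟨v0, hv0⟩ := Finset.nonempty_iff_ne_empty.mpr (hall l0)
        obtain ⟨v1, hv1⟩ := Finset.nonempty_iff_ne_empty.mpr (hall l1)
        refine hout l0 hl0 v0 hv0 (hC (fun v => ∃ L1 L2, l1 :: L = L1 ++ L2 ∧ Tr c u v L1 ∧ Tr c v u L2)
          ?_ l1 l0 v1 v0 hv1 hv0 (T.visit List.mem_cons_self hv1))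
        intro l p hp q hq hX
        by_cases hl : l ∈ l1 :: L
        · exact T.visit hl hq
        · exact absurd hX (hout l hl p hp)
    obtain ⟨l, v, L1, L2, hl, hv, hperm, T'⟩ := key
    obtain ⟨x, hxv, hx⟩ := pairOf hP hv
    refine ⟨x, v, l :: (L2 ++ L1), Tr.cons hx hxv T', ?_, ?_⟩
    · rw [List.nodup_cons]
      exact ⟨fun h => hl (hperm.mem_iff.mpr h), hperm.nodup_iff.mp hn⟩
    · rw [List.length_cons, hperm.length_eq]
  · have : ∃ l, l ∉ L ∧ u ∈ c l := by
      by_contra hcon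
      push Not at hcon
      have h1 := T.par u
      have h2 := hP.even u
      unfold bal at h2
      rw [← List.sum_toFinset _ hn] at h1
      rw [← Finset.sum_subset (Finset.subset_univ L.toFinset), h1] at h2
      · simp [dl, huw] at h2
      · intro l _ hl
        have := hcon l (by simpa using hl)
        simp [chi, this]
    obtain ⟨l, hl, hu⟩ := this
    obtain ⟨x, hxu, hx⟩ := pairOf hP hu
    exact ⟨x, w, l :: L, Tr.cons hx hxu T, List.nodup_cons.mpr ⟨hl, hn⟩, rfl⟩

theorem euler {t c : ι → Finset V} (hP : PSt t c) (hC : Conn c) (hall : ∀ l, c l ≠ ∅) (v0 : V) :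
    ∃ u L, Tr c u u L ∧ L.Nodup ∧ ∀ l, l ∈ L := by
  by_contra hcon
  have : ∀ n, ∃ u w L, Tr c u w L ∧ L.Nodup ∧ L.length = n := by
    intro n
    induction n with
    | zero => exact ⟨v0, v0, [], Tr.nil _, List.nodup_nil, rfl⟩
    | succ n ih =>
      obtain ⟨u, w, L, T, hn, rfl⟩ := ih
      apply extend hP hC hall T hn
      rintro ⟨rfl, h⟩
      exact hcon ⟨u, L, T, hn, h⟩
  obtain ⟨u, w, L, T, hn, hL⟩ := this (Fintype.card ι + 1)
  have := hn.length_le_card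
  omega

theorem Tr.walk {c : ι → Finset V} {u w : V} {L : List ι} (h : Tr c u w L) :
    ∃ v : Fin (L.length + 1) → V, v 0 = u ∧ v (Fin.last _) = w ∧
      ∀ i : Fin L.length, v i.castSucc ≠ v i.succ ∧ v i.castSucc ∈ c (L.get i) ∧ v i.succ ∈ c (L.get i) := by
  induction h with
  | nil u => exact ⟨fun _ => u, rfl, rfl, fun i => i.elim0⟩
  | @cons u x w l' L hc hne T ih =>
    obtain ⟨v, h0, h1, h2⟩ := ih
    refine ⟨Fin.cons u v, rfl, ?_, ?_⟩
    · exact h1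
    · intro i
      refine Fin.cases ?_ (fun j => ?_) i
      · refine ⟨?_, ?_, ?_⟩
        · show u ≠ v 0
          rw [h0]; exact hne
        · show u ∈ c l'
          rw [hc]; simp
        · show v 0 ∈ c l'
          rw [h0, hc]; simp
      · exact h2 j

end CovEuler


namespace CovEuler

theorem triples {V ι : Type} [Fintype V] [DecidableEq V] (k : ℕ) (hk : 3 ≤ k) (t : ι → Finset V)
    (ht : ∀ l, (t l).card = k) (Z : Finset V) (hZ : Z.card = k - 3) (l : ι) :
    ∃ s : Finset {x // x ∉ Z}, s.card = 3 ∧ (∀ x ∈ s, x.1 ∈ t l) ∧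
      (Z ⊆ t l → ∀ x : {x // x ∉ Z}, x.1 ∈ t l → x ∈ s) := by
  have hc : ((t l).subtype (fun x => x ∉ Z)).card = (t l \ Z).card := by
    rw [Finset.card_subtype]
    congr 1
    ext x; simp
  have h1 := Finset.le_card_sdiff Z (t l)
  have h2 := ht l
  obtain ⟨s, hs, hs3⟩ := Finset.exists_subset_card_eq (s := (t l).subtype (fun x => x ∉ Z)) (n := 3) (by omega)
  refine ⟨s, hs3, ?_, ?_⟩
  · intro x hx
    exact Finset.mem_subtype.mp (hs hx)
  · intro hZl x hx
    have h3 := Finset.card_sdiff_of_subset hZl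
    have : s = (t l).subtype (fun x => x ∉ Z) := Finset.eq_of_subset_of_card_le hs (by omega)
    rw [this]
    exact Finset.mem_subtype.mpr hx

theorem backward {V : Type} [Fintype V] [DecidableEq V]
    (k : ℕ) (hk : 3 ≤ k) (E : Multiset (Finset V))
    (hH : IsCoveringHypergraph E (k - 1) k) (h2 : 2 ≤ Multiset.card E) : IsEulerian E := by
  classical
  obtain ⟨hE, hcard, hcov⟩ := hH
  obtain ⟨n, hn⟩ : ∃ n, n = E.toList.length := ⟨_, rfl⟩
  have hlen : 2 ≤ E.toList.length := by rw [Multiset.length_toList]; exact h2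
  let t : Fin E.toList.length → Finset V := fun i => E.toList.get i
  have htE : ∀ l, t l ∈ E := fun l => Multiset.mem_toList.mp (List.get_mem _ _)
  have ht : ∀ l, (t l).card = k := fun l => hcard _ (htE l)
  have hidx : ∀ e ∈ E, ∃ l, t l = e := fun e he => List.mem_iff_get.mp (Multiset.mem_toList.mpr he)
  let l0 : Fin E.toList.length := ⟨0, by omega⟩
  obtain ⟨Z, hZs, hZ⟩ := Finset.exists_subset_card_eq (s := t l0) (n := k - 3) (by rw [ht]; omega)
  choose s hs1 hs2 hs3 using triples k hk t ht Z hZ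
  have cov : ∀ p q : {x // x ∉ Z}, p ≠ q → ∃ l, p ∈ s l ∧ q ∈ s l := by
    intro p q hpq
    have hne : p.1 ≠ q.1 := fun h => hpq (Subtype.ext h)
    obtain ⟨e, he, hse⟩ := hcov (insert p.1 (insert q.1 Z)) (by
      rw [Finset.card_insert_of_notMem, Finset.card_insert_of_notMem q.2, hZ]
      · omega
      · rw [Finset.mem_insert]; rintro (h | h)
        · exact hne h
        · exact p.2 h)
    obtain ⟨l, rfl⟩ := hidx e he
    have hZl : Z ⊆ t l := fun z hz => hse (by simp [hz])
    exact ⟨l, hs3 l hZl p (hse (by simp)), hs3 l hZl q (hse (by simp))⟩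
  have hι : ∀ f : Fin E.toList.length, ∃ i, i ≠ f := by
    intro f
    by_cases h : f = l0
    · refine ⟨⟨1, by omega⟩, ?_⟩
      rw [h]; intro h'; simp [l0, Fin.ext_iff] at h'
    · exact ⟨l0, fun h' => h h'.symm⟩
  obtain ⟨c, hP, hC, hall⟩ := main_state hs1 cov hι l0
  obtain ⟨v0, _⟩ := Finset.nonempty_iff_ne_empty.mpr (hall l0)
  obtain ⟨u, L, T, hnd, hL⟩ := euler hP hC hall v0
  obtain ⟨v, hv0, hv1, hv⟩ := T.walk
  refine ⟨L.length, fun i => (v i).1, fun i => t (L.get i), ⟨?_, ?_⟩, ?_⟩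
  · show (v 0).1 = (v (Fin.last _)).1
    rw [hv0, hv1]
  · intro i
    obtain ⟨a1, a2, a3⟩ := hv i
    exact ⟨fun h => a1 (Subtype.ext h), hs2 _ _ (hP.sub _ a2), hs2 _ _ (hP.sub _ a3)⟩
  · unfold walkEdges
    have e1 : List.ofFn (fun i => t (L.get i)) = L.map t := by
      apply List.ext_get <;> simp
    have e2 : L.Perm (List.finRange E.toList.length) := by
      rw [List.perm_ext_iff_of_nodup hnd (List.nodup_finRange _)]
      intro a; simp [hL a]
    have e3 : (List.finRange E.toList.length).map t = E.toList := by
      apply List.ext_get <;> simp [t]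
    rw [e1]
    have e4 : (L.map t).Perm E.toList := (e2.map t).trans (List.Perm.of_eq e3)
    rw [show (Multiset.ofList (L.map t)) = Multiset.ofList E.toList from Multiset.coe_eq_coe.mpr e4]
    exact Multiset.coe_toList E

theorem forward {V : Type} [DecidableEq V] (k : ℕ) (E : Multiset (Finset V))
    (hE : E ≠ 0) (h : IsEulerian E) : 2 ≤ Multiset.card E := by
  obtain ⟨n, v, e, ⟨h0, h1⟩, hw⟩ := h
  have hc : Multiset.card E = n := by rw [← hw]; simp [walkEdges]
  rw [hc]
  match n, v, e, h0, h1, hc with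
  | 0, v, e, h0, h1, hc => exact absurd (Multiset.card_eq_zero.mp hc) hE
  | 1, v, e, h0, h1, hc => exact absurd h0 (h1 0).1
  | n + 2, v, e, h0, h1, hc => omega

end CovEuler

theorem coveringKHypergraph_eulerian_iff_two_le_card {V : Type} [Fintype V] [DecidableEq V]
    (k : ℕ) (hk : 3 ≤ k) (E : Multiset (Finset V))
    (hH : IsCoveringHypergraph E (k - 1) k) :
    IsEulerian E ↔ 2 ≤ Multiset.card E :=
  ⟨CovEuler.forward k E hH.1, CovEuler.backward k hk E hH⟩
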